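/- arXiv:1701.02868 — 4 statements merged into one kernel-verified Lean document; each statement's English description precedes it below -/
import Mathlib

section
/- Let Δ be a simplicial complex on X = {x_1,…,x_n} and let k be a positive integer. Then Δ is shellable if and only if the expansion Δ^k is k-shellable. -/
/-- An abstract simplicial complex on vertex type `V`: a collection of finite subsets
(faces) closed under taking subsets. -/
def IsComplex {V : Type*} (Δ : Set (Finset V)) : Prop :=
  ∀ ⦃F G : Finset V⦄, F ∈ Δ → G ⊆ F → G ∈ Δ

/-- The facets (maximal faces) of a collection of finite sets. -/
def facets {V : Type*} (Δ : Set (Finset V)) : Set (Finset V) :=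
  {F | F ∈ Δ ∧ ∀ G ∈ Δ, F ⊆ G → F = G}

/-- The faces of the subcomplex `⟨F j⟩ ∩ ⟨F 0, …, F (j-1)⟩` determined by a list
`F 0, …, F (r-1)` of facets. -/
def interFace {V : Type*} {r : ℕ} (F : Fin r → Finset V) (j : Fin r) (G : Finset V) : Prop :=
  G ⊆ F j ∧ ∃ i : Fin r, (i : ℕ) < (j : ℕ) ∧ G ⊆ F i

/-- `F 0, …, F (r-1)` is a `k`-shelling order: for each `j > 0`, the subcomplex
`⟨F j⟩ ∩ ⟨F 0, …, F (j-1)⟩` is generated by a nonempty set `S` of (maximal) proper faces of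
`⟨F j⟩` of dimension `|F j| - k - 1`, and if it has more than one facet then any two
disjoint facets `σ, τ` of it satisfy `F j ⊆ σ ∪ τ`. -/
def IsKShellingOrder {V : Type*} [DecidableEq V] (k : ℕ) {r : ℕ} (F : Fin r → Finset V) :
    Prop :=
  ∀ j : Fin r, 0 < (j : ℕ) →
    ∃ S : Finset (Finset V), S.Nonempty ∧
      (∀ σ ∈ S, σ ⊆ F j ∧ σ.card + k = (F j).card) ∧
      (∀ G : Finset V, interFace F j G ↔ ∃ σ ∈ S, G ⊆ σ) ∧
      (1 < S.card → ∀ σ ∈ S, ∀ τ ∈ S, Disjoint σ τ → F j ⊆ σ ∪ τ)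

/-- A complex is `k`-shellable if its facets can be enumerated by a `k`-shelling order. -/
def IsKShellable {V : Type*} [DecidableEq V] (k : ℕ) (Δ : Set (Finset V)) : Prop :=
  ∃ (r : ℕ) (F : Fin r → Finset V),
    Function.Injective F ∧ Set.range F = facets Δ ∧ IsKShellingOrder k F

/-- Classical shelling order: for each `j > 0` the subcomplex `⟨F j⟩ ∩ ⟨F 0, …, F (j-1)⟩`
is pure of dimension `dim (F j) - 1`, i.e. every face of it is contained in a face of it of
cardinality `|F j| - 1`. -/
def IsShellingOrder {V : Type*} {r : ℕ} (F : Fin r → Finset V) : Prop :=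
  ∀ j : Fin r, 0 < (j : ℕ) → ∀ G : Finset V, interFace F j G →
    ∃ G' : Finset V, interFace F j G' ∧ G ⊆ G' ∧ G'.card + 1 = (F j).card

/-- A complex is shellable if its facets can be enumerated by a shelling order. -/
def IsShellable {V : Type*} (Δ : Set (Finset V)) : Prop :=
  ∃ (r : ℕ) (F : Fin r → Finset V),
    Function.Injective F ∧ Set.range F = facets Δ ∧ IsShellingOrder F

/-- The expansion `F^k` of a finite set of vertices with respect to `k`. -/
def expandSet {V : Type*} (k : ℕ) (F : Finset V) : Finset (V × Fin k) :=
  F ×ˢ Finset.univ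

/-- The expansion `Δ^k` of a simplicial complex with respect to `k`:
the complex generated by the expansions of the facets of `Δ`. -/
def expansion {V : Type*} (k : ℕ) (Δ : Set (Finset V)) : Set (Finset (V × Fin k)) :=
  {G | ∃ F ∈ facets Δ, G ⊆ expandSet k F}

/-!
A face `G` of the expanded complex lies in `A^k` exactly when its projection to `V` lies in `A`, so
the intersections `⟨F_j⟩ ∩ ⟨F_1, …, F_{j-1}⟩` before and after expansion determine each other.

If the `F_j` form a shelling order, the codimension-one faces of these intersections expand to
faces of codimension `k` which generate the expanded intersections. Two distinct codimension-one
faces of `F_j` together cover `F_j`, which gives condition (ii) for `σ ≠ τ`; the case `σ = τ` does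
not arise, since a generator disjoint from itself is empty and hence the only generator.

Conversely, let `σ` be a generator of codimension `k` in the expanded intersection and `A` its
projection. Then `σ ⊆ A^k` forces `|A| ≥ |F_j| - 1`, and `A` is a proper subset of `F_j` because
`F_j^k` is not itself a face of the intersection.
-/

section General

variable {α β ι : Type*}

theorem exists_injective_range_eq_image_iff {f : α → β} (hf : Function.Injective f) {s : Set α}
    {p : (ι → β) → Prop} :
    (∃ g : ι → β, Function.Injective g ∧ Set.range g = f '' s ∧ p g) ↔
      ∃ g : ι → α, Function.Injective g ∧ Set.range g = s ∧ p (f ∘ g) := by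
  constructor
  · rintro ⟨g, hg, hrange, hp⟩
    obtain ⟨g, rfl⟩ := Set.range_subset_range_iff_exists_comp.1
      (hrange.trans_subset (Set.image_subset_range f s))
    exact ⟨g, hg.of_comp, hf.image_injective ((Set.range_comp f g).symm.trans hrange), hp⟩
  · rintro ⟨g, hg, rfl, hp⟩
    exact ⟨f ∘ g, hf.comp hg, Set.range_comp f g, hp⟩

theorem ne_of_disjoint_of_isAntichain [PartialOrder α] [OrderBot α] {s : Set α}
    (hs : IsAntichain (· ≤ ·) s) (hnt : s.Nontrivial) {a b : α} (ha : a ∈ s)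
    (hab : Disjoint a b) : a ≠ b := by
  rintro rfl
  obtain rfl := disjoint_self.1 hab
  exact hnt.ne_singleton (hs.bot_mem_iff.1 ha)

theorem covBy_iff_subset_and_card_add_one {A B : Finset α} :
    A ⋖ B ↔ A ⊆ B ∧ A.card + 1 = B.card := by
  classical
  rw [Finset.covBy_iff_card_sdiff_eq_one]
  refine and_congr_right fun hAB => ?_
  have := Finset.card_sdiff_add_card_eq_card hAB
  omega

end General

section Expansion

variable {V : Type*} {k : ℕ}

theorem card_expandSet (A : Finset V) : (expandSet k A).card = A.card * k := by
  simp [expandSet]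

theorem expandSet_mono : Monotone (expandSet k : Finset V → Finset (V × Fin k)) :=
  fun _ _ h => Finset.product_subset_product_left h

theorem expandSet_union [DecidableEq V] (A B : Finset V) :
    expandSet k (A ∪ B) = expandSet k A ∪ expandSet k B :=
  Finset.union_product

theorem subset_expandSet_iff [DecidableEq V] {G : Finset (V × Fin k)} {A : Finset V} :
    G ⊆ expandSet k A ↔ G.image Prod.fst ⊆ A := by
  simp [expandSet, Finset.subset_iff]

theorem image_fst_expandSet [DecidableEq V] (hk : 0 < k) (A : Finset V) :
    (expandSet k A).image Prod.fst = A :=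
  have : NeZero k := ⟨hk.ne'⟩
  Finset.product_image_fst Finset.univ_nonempty

theorem expandSet_subset_expandSet_iff (hk : 0 < k) {A B : Finset V} :
    expandSet k A ⊆ expandSet k B ↔ A ⊆ B := by
  classical
  rw [subset_expandSet_iff, image_fst_expandSet hk]

theorem expandSet_injective (hk : 0 < k) :
    Function.Injective (expandSet k : Finset V → Finset (V × Fin k)) := by
  classical
  exact Function.LeftInverse.injective (image_fst_expandSet hk)

theorem facets_expansion (hk : 0 < k) (Δ : Set (Finset V)) :
    facets (expansion k Δ) = expandSet k '' facets Δ := by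
  ext G
  constructor
  · rintro ⟨⟨A, hA, hGA⟩, hmax⟩
    exact ⟨A, hA, (hmax _ ⟨A, hA, subset_rfl⟩ hGA).symm⟩
  · rintro ⟨A, hA, rfl⟩
    refine ⟨⟨A, hA, subset_rfl⟩, ?_⟩
    rintro G ⟨B, hB, hGB⟩ hAG
    obtain rfl : A = B := hA.2 B hB.1 ((expandSet_subset_expandSet_iff hk).1 (hAG.trans hGB))
    exact hAG.antisymm hGB

end Expansion

section Order

variable {V : Type*} {k r : ℕ} {F : Fin r → Finset V} {j : Fin r}

theorem interFace.mono {G A : Finset V} (hA : interFace F j A) (hGA : G ⊆ A) :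
    interFace F j G := by
  obtain ⟨hAj, i, hij, hAi⟩ := hA
  exact ⟨hGA.trans hAj, i, hij, hGA.trans hAi⟩

theorem interFace_empty (hj : 0 < (j : ℕ)) : interFace F j ∅ :=
  ⟨Finset.empty_subset _, ⟨0, hj.trans j.isLt⟩, hj, Finset.empty_subset _⟩

theorem interFace_expandSet_comp_iff [DecidableEq V] {G : Finset (V × Fin k)} :
    interFace (expandSet k ∘ F) j G ↔ interFace F j (G.image Prod.fst) := by
  simp only [interFace, Function.comp_apply, subset_expandSet_iff]

open Classical in
/-- The codimension-one faces of `⟨F j⟩` that lie in `⟨F j⟩ ∩ ⟨F 0, …, F (j-1)⟩`. The codimension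
is expressed by `A ⋖ F j`, the covering relation of the inclusion order. -/
noncomputable def ridges (F : Fin r → Finset V) (j : Fin r) : Finset (Finset V) :=
  {A ∈ (F j).powerset | interFace F j A ∧ A ⋖ F j}

theorem mem_ridges {A : Finset V} : A ∈ ridges F j ↔ interFace F j A ∧ A ⋖ F j := by
  classical
  simpa [ridges] using fun h _ => h.1

theorem isShellingOrder_iff_exists_mem_ridges :
    IsShellingOrder F ↔
      ∀ j : Fin r, 0 < (j : ℕ) → ∀ G, interFace F j G → ∃ A ∈ ridges F j, G ⊆ A := by
  refine forall₄_congr fun j _ G _ => exists_congr fun A => ?_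
  rw [mem_ridges, covBy_iff_subset_and_card_add_one]
  exact ⟨fun ⟨hA, hGA, hcard⟩ => ⟨⟨hA, hA.1, hcard⟩, hGA⟩,
    fun ⟨⟨hA, _, hcard⟩, hGA⟩ => ⟨hA, hGA, hcard⟩⟩

theorem union_eq_of_mem_ridges [DecidableEq V] {A B : Finset V} (hA : A ∈ ridges F j)
    (hB : B ∈ ridges F j) (hAB : A ≠ B) : A ∪ B = F j :=
  (mem_ridges.1 hA).2.wcovBy.sup_eq (mem_ridges.1 hB).2.wcovBy hAB

theorem card_expandSet_add_of_mem_ridges {A : Finset V} (hA : A ∈ ridges F j) :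
    (expandSet k A).card + k = (expandSet k (F j)).card := by
  have hcard : A.card + 1 = (F j).card :=
    (covBy_iff_subset_and_card_add_one.1 (mem_ridges.1 hA).2).2
  rw [card_expandSet, card_expandSet, ← hcard, Nat.add_one_mul]

theorem isAntichain_image_expandSet_ridges [DecidableEq V] :
    IsAntichain (· ⊆ ·) ((ridges F j).image (expandSet k) : Set (Finset (V × Fin k))) := by
  refine Set.Sized.isAntichain (r := (expandSet k (F j)).card - k) ?_
  intro σ hσ
  obtain ⟨A, hA, rfl⟩ := Finset.mem_image.1 hσ
  exact Nat.eq_sub_of_add_eq (card_expandSet_add_of_mem_ridges hA)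

theorem IsShellingOrder.interFace_expandSet_comp_iff_exists_mem_ridges (hF : IsShellingOrder F)
    (hj : 0 < (j : ℕ)) {G : Finset (V × Fin k)} :
    interFace (expandSet k ∘ F) j G ↔ ∃ A ∈ ridges F j, G ⊆ expandSet k A := by
  classical
  simp only [interFace_expandSet_comp_iff, subset_expandSet_iff]
  exact ⟨isShellingOrder_iff_exists_mem_ridges.1 hF j hj _,
    fun ⟨_, hA, hGA⟩ => (mem_ridges.1 hA).1.mono hGA⟩

theorem IsShellingOrder.isKShellingOrder_expandSet_comp [DecidableEq V] (hF : IsShellingOrder F) :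
    IsKShellingOrder k (expandSet k ∘ F) := by
  intro j hj
  refine ⟨(ridges F j).image (expandSet k), ?nonempty, ?codim, ?generate, ?cover⟩
  case nonempty =>
    obtain ⟨A, hA, -⟩ := isShellingOrder_iff_exists_mem_ridges.1 hF j hj ∅ (interFace_empty hj)
    exact ⟨_, Finset.mem_image_of_mem _ hA⟩
  case codim =>
    rw [Finset.forall_mem_image]
    exact fun A hA =>
      ⟨expandSet_mono (mem_ridges.1 hA).1.1, card_expandSet_add_of_mem_ridges hA⟩
  case generate =>
    intro G
    rw [Finset.exists_mem_image]
    exact hF.interFace_expandSet_comp_iff_exists_mem_ridges hj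
  case cover =>
    intro hcard σ hσ τ hτ hdisj
    have hne : σ ≠ τ := ne_of_disjoint_of_isAntichain isAntichain_image_expandSet_ridges
      (Finset.one_lt_card_iff_nontrivial.1 hcard) hσ hdisj
    obtain ⟨A, hA, rfl⟩ := Finset.mem_image.1 hσ
    obtain ⟨B, hB, rfl⟩ := Finset.mem_image.1 hτ
    rw [← expandSet_union, union_eq_of_mem_ridges hA hB (ne_of_apply_ne _ hne),
      Function.comp_apply]

theorem IsKShellingOrder.not_interFace_self [DecidableEq V] (hk : 0 < k)
    (hF : IsKShellingOrder k F) (hj : 0 < (j : ℕ)) : ¬ interFace F j (F j) := by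
  obtain ⟨S, -, hcodim, hgen, -⟩ := hF j hj
  intro hself
  obtain ⟨σ, hσ, hsub⟩ := (hgen (F j)).1 hself
  have hle := Finset.card_le_card hsub
  have hcard := (hcodim σ hσ).2
  omega

theorem IsKShellingOrder.isShellingOrder_of_expandSet_comp [DecidableEq V] (hk : 0 < k)
    (hF : IsKShellingOrder k (expandSet k ∘ F)) : IsShellingOrder F := by
  intro j hj G hG
  obtain ⟨S, -, hcodim, hgen, -⟩ := hF j hj
  obtain ⟨σ, hσ, hGσ⟩ : ∃ σ ∈ S, expandSet k G ⊆ σ := by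
    rwa [← hgen, interFace_expandSet_comp_iff, image_fst_expandSet hk]
  have hA : interFace F j (σ.image Prod.fst) :=
    interFace_expandSet_comp_iff.1 ((hgen σ).2 ⟨σ, hσ, subset_rfl⟩)
  refine ⟨σ.image Prod.fst, hA, ?_, le_antisymm ?_ ?_⟩
  · rw [← image_fst_expandSet hk G]
    exact Finset.image_subset_image hGσ
  · have hne : σ.image Prod.fst ≠ F j := fun h => hF.not_interFace_self hk hj <| by
      rwa [interFace_expandSet_comp_iff, Function.comp_apply, image_fst_expandSet hk, ← h]
    exact Finset.card_lt_card (hA.1.ssubset_of_ne hne)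
  · have hσA : σ.card ≤ (σ.image Prod.fst).card * k := by
      rw [← card_expandSet]
      exact Finset.card_le_card (subset_expandSet_iff.2 subset_rfl)
    refine Nat.le_of_mul_le_mul_right ?_ hk
    calc (F j).card * k = σ.card + k := by
          rw [← card_expandSet, (hcodim σ hσ).2, Function.comp_apply]
      _ ≤ (σ.image Prod.fst).card * k + k := by gcongr
      _ = ((σ.image Prod.fst).card + 1) * k := (Nat.add_one_mul _ _).symm

theorem isShellingOrder_iff_isKShellingOrder_expandSet_comp [DecidableEq V] (hk : 0 < k) :
    IsShellingOrder F ↔ IsKShellingOrder k (expandSet k ∘ F) :=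
  ⟨IsShellingOrder.isKShellingOrder_expandSet_comp,
    IsKShellingOrder.isShellingOrder_of_expandSet_comp hk⟩

end Order

theorem isShellable_iff_isKShellable_expansion_general {V : Type*} [DecidableEq V]
    (Δ : Set (Finset V)) {k : ℕ} (hk : 1 ≤ k) :
    IsShellable Δ ↔ IsKShellable k (expansion k Δ) := by
  simp only [IsShellable, IsKShellable, facets_expansion hk,
    exists_injective_range_eq_image_iff (expandSet_injective hk),
    isShellingOrder_iff_isKShellingOrder_expandSet_comp hk]

/-- Theorem: a simplicial complex `Δ` is shellable iff its expansion `Δ^k` is `k`-shellable. -/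
theorem isShellable_iff_isKShellable_expansion {V : Type*} [DecidableEq V] [Fintype V]
    (Δ : Set (Finset V)) (hΔ : IsComplex Δ) (hΔe : ∅ ∈ Δ) (k : ℕ) (hk : 1 ≤ k) :
    IsShellable Δ ↔ IsKShellable k (expansion k Δ) :=
  isShellable_iff_isKShellable_expansion_general Δ hk
end

section
/- Let K be a field, S = K[x_1,…,x_n], k > 1 an integer, and let F_1,…,F_s be pairwise disjoint subsets of {x_1,…,x_n} each of cardinality k. Let f_1,…,f_{k^s} be the minimal monomial generators of the product ideal P_{F_1}⋯P_{F_s} ⊂ S, listed in decreasing lexicographic order induced by x_1 > x_2 > … > x_n. Then for every i = 2,…,k^s the colon ideal (f_1,…,f_{i−1}) : (f_i) is generated by linear forms (in fact by variables), and if n_i denotes the minimal number of homogeneous generators of (f_1,…,f_{i−1}) : (f_i), then max{n_i : i = 2,…,k^s} = n_{k^s} = (k−1)s. -/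
open MvPolynomial

/-!
Put `m = x_{g 1} ⋯ x_{g s}`. A lexicographically larger generator `x_{g' 1} ⋯ x_{g' s}` has
`g' j < g j` for some `j`, and by disjointness the variable `x_{g' j}` does not divide `m`.
Conversely, for `v ∈ F j` with `v < g j`, replacing `x_{g j}` by `x_v` in `m` gives a larger
generator that divides `x_v m`. So the colon ideal at `m` is generated by the variables `x_v` with
`v ∈ F j` and `v < g j` for some `j`. The block `F j` contributes at most `#(F j) - 1` of them, with
equality when `g j = max (F j)`, and the last generator takes the maximum in every block. Finally,
variables form a minimal generating set because their linear coefficients are linearly independent.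
-/

section LinearCoeffs

variable {σ R : Type*} [CommSemiring R]

/-- The coefficients of a polynomial at the variables in `W`. They factor through `𝔪 / 𝔪 ^ 2` on
the ideal `𝔪` of polynomials without constant term, and serve to count generators of ideals
contained in `𝔪`. -/
noncomputable def linearCoeffs (W : Finset σ) : MvPolynomial σ R →ₗ[R] (W → R) :=
  LinearMap.pi fun w => lcoeff R (Finsupp.single (w : σ) 1)

theorem linearCoeffs_apply (W : Finset σ) (p : MvPolynomial σ R) (w : W) :
    linearCoeffs W p w = coeff (Finsupp.single (w : σ) 1) p :=
  rfl

theorem linearCoeffs_mul (W : Finset σ) (p q : MvPolynomial σ R) :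
    linearCoeffs W (p * q) =
      constantCoeff p • linearCoeffs W q + constantCoeff q • linearCoeffs W p := by
  classical
  ext w
  rw [linearCoeffs_apply, coeff_mul, Finsupp.antidiagonal_single, Finset.sum_map]
  simp [linearCoeffs_apply, constantCoeff_eq, Finset.Nat.antidiagonal_succ, mul_comm]

theorem linearCoeffs_X (W : Finset σ) (w : W) :
    linearCoeffs W (X (w : σ) : MvPolynomial σ R) = Pi.basisFun R W w := by
  classical
  ext u
  simp only [linearCoeffs_apply, coeff_X, Pi.basisFun_apply, Pi.single_apply,
    Finsupp.single_left_inj one_ne_zero, Subtype.ext_iff, eq_comm]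

theorem linearCoeffs_mem_span_image {S : Set (MvPolynomial σ R)} (W : Finset σ)
    (hS : ∀ p ∈ S, constantCoeff p = 0) {p : MvPolynomial σ R} (hp : p ∈ Ideal.span S) :
    linearCoeffs W p ∈ Submodule.span R (linearCoeffs W '' S) := by
  have hspan : Ideal.span S ≤ RingHom.ker constantCoeff := Ideal.span_le.2 hS
  induction hp using Submodule.span_induction with
  | mem q hq => exact Submodule.subset_span ⟨q, hq, rfl⟩
  | zero => simp
  | add q r _ _ ihq ihr => simpa only [map_add] using add_mem ihq ihr
  | smul a q hq ih =>
    rw [smul_eq_mul, linearCoeffs_mul, (hspan hq : constantCoeff q = 0), zero_smul, add_zero]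
    exact Submodule.smul_mem _ _ ih

theorem card_le_card_of_span_eq_span_X_image [Nontrivial R] {W : Finset σ}
    {T : Finset (MvPolynomial σ R)} (hT : Ideal.span (T : Set (MvPolynomial σ R)) =
      Ideal.span ((fun v => (X v : MvPolynomial σ R)) '' W)) :
    W.card ≤ T.card := by
  classical
  have hconst : ∀ p ∈ (T : Set (MvPolynomial σ R)), constantCoeff p = 0 := by
    have hker : Ideal.span ((fun v => (X v : MvPolynomial σ R)) '' W) ≤
        RingHom.ker constantCoeff := Ideal.span_le.2 (by rintro _ ⟨v, -, rfl⟩; simp)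
    exact fun p hp => hker (hT ▸ Ideal.subset_span hp)
  have htop : Submodule.span R (linearCoeffs W '' (T : Set (MvPolynomial σ R))) = ⊤ := by
    rw [eq_top_iff, ← (Pi.basisFun R W).span_eq, Submodule.span_le]
    rintro _ ⟨w, rfl⟩
    rw [← linearCoeffs_X]
    exact linearCoeffs_mem_span_image W hconst (hT ▸ Ideal.subset_span ⟨w, w.2, rfl⟩)
  rw [← Finset.coe_image] at htop
  calc W.card = Fintype.card W := (Fintype.card_coe W).symm
    _ ≤ Fintype.card (T.image (linearCoeffs W) : Set (W → R)) :=
      Basis.le_span'' (Pi.basisFun R W) htop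
    _ = (T.image (linearCoeffs W)).card := Fintype.card_coe _
    _ ≤ T.card := Finset.card_image_le

end LinearCoeffs

section MonomialColon

variable {σ R : Type*} [CommSemiring R] {A : Set (σ →₀ ℕ)} {m : σ →₀ ℕ}

theorem mem_colon_span_monomial_iff {p : MvPolynomial σ R} :
    p ∈ Submodule.colon (Ideal.span ((fun a => monomial a (1 : R)) '' A))
        (Ideal.span {monomial m (1 : R)}) ↔
      ∀ d ∈ p.support, ∃ a ∈ A, a ≤ d + m := by
  rw [Ideal.mem_colon_span_singleton, mem_ideal_span_monomial_image]
  refine ⟨fun h d hd => h (d + m) (by simpa [coeff_mul_monomial] using hd), fun h e he => ?_⟩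
  have he' := mem_support_iff.1 he
  rw [coeff_mul_monomial', ite_ne_right_iff, mul_one] at he'
  simpa [tsub_add_cancel_of_le he'.1] using h (e - m) (mem_support_iff.2 he'.2)

theorem colon_span_monomial_eq_span_X {V : Set σ} (hlt : ∀ a ∈ A, ∃ v ∈ V, m v < a v)
    (hle : ∀ v ∈ V, ∃ a ∈ A, a ≤ Finsupp.single v 1 + m) :
    Submodule.colon (Ideal.span ((fun a => monomial a (1 : R)) '' A))
        (Ideal.span {monomial m (1 : R)}) =
      Ideal.span ((fun v => (X v : MvPolynomial σ R)) '' V) := by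
  ext p
  rw [mem_colon_span_monomial_iff, mem_ideal_span_X_image]
  refine forall₂_congr fun d _ => ⟨fun ⟨a, ha, had⟩ => ?_, fun ⟨v, hv, hdv⟩ => ?_⟩
  · obtain ⟨v, hv, hmv⟩ := hlt a ha
    have hdv : a v ≤ d v + m v := had v
    exact ⟨v, hv, by omega⟩
  · obtain ⟨a, ha, hav⟩ := hle v hv
    have hvd : Finsupp.single v 1 ≤ d := Finsupp.single_le_iff.2 (Nat.one_le_iff_ne_zero.2 hdv)
    exact ⟨a, ha, hav.trans (by gcongr)⟩

end MonomialColon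

section ChoiceExponent

variable {ι σ : Type*} [Fintype ι]

/-- The exponent vector of the monomial `∏ i, X (g i)`; for `g i ∈ F i` these are the exponents of
the minimal generators of the product of the ideals `P_{F i}`. -/
noncomputable def choiceExponent (g : ι → σ) : σ →₀ ℕ :=
  ∑ i, Finsupp.single (g i) 1

theorem exists_eq_of_choiceExponent_ne_zero {g : ι → σ} {v : σ} (h : choiceExponent g v ≠ 0) :
    ∃ i, g i = v := by
  by_contra! hne
  exact h (by simp [choiceExponent, Finsupp.finsetSum_apply, hne])

section Update

variable [DecidableEq ι]

theorem choiceExponent_update (g : ι → σ) (j : ι) (v : σ) :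
    choiceExponent (Function.update g j v) =
      Finsupp.single v 1 + ∑ i ∈ Finset.univ \ {j}, Finsupp.single (g i) 1 := by
  simp only [choiceExponent, Function.apply_update (fun _ u => Finsupp.single u 1),
    Finset.sum_update_of_mem (Finset.mem_univ j)]

theorem choiceExponent_update_le (g : ι → σ) (j : ι) (v : σ) :
    choiceExponent (Function.update g j v) ≤ Finsupp.single v 1 + choiceExponent g := by
  rw [choiceExponent_update, choiceExponent]
  gcongr
  exact Finset.subset_univ _

theorem strictAnti_toLex_choiceExponent_update [LinearOrder σ] (g : ι → σ) (j : ι) :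
    StrictAnti fun v => toLex (choiceExponent (Function.update g j v)) := fun v w hvw => by
  simp only [choiceExponent_update, toLex_add]
  exact add_lt_add_left (Finsupp.Lex.single_lt_iff.2 hvw) _

theorem toLex_choiceExponent_lt_update_iff [LinearOrder σ] {g : ι → σ} {j : ι} {v : σ} :
    toLex (choiceExponent g) < toLex (choiceExponent (Function.update g j v)) ↔ v < g j := by
  simpa using (strictAnti_toLex_choiceExponent_update g j).lt_iff_gt (a := g j) (b := v)

end Update

section Transversal

variable {F : ι → Finset σ} {g g' : ι → σ}

theorem choiceExponent_apply_of_mem [DecidableEq σ] (hdisj : Pairwise (Function.onFun Disjoint F))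
    (hg : ∀ i, g i ∈ F i) {j : ι} {v : σ} (hv : v ∈ F j) :
    choiceExponent g v = if g j = v then 1 else 0 := by
  rw [choiceExponent, Finsupp.finsetSum_apply, Fintype.sum_eq_single j, Finsupp.single_apply]
  intro i hij
  exact Finsupp.single_eq_of_ne' fun hiv => Finset.disjoint_left.1 (hdisj hij) (hg i) (hiv ▸ hv)

variable [LinearOrder σ]

theorem exists_lt_of_toLex_choiceExponent_lt (hdisj : Pairwise (Function.onFun Disjoint F))
    (hg : ∀ i, g i ∈ F i) (hg' : ∀ i, g' i ∈ F i)
    (hlt : toLex (choiceExponent g) < toLex (choiceExponent g')) : ∃ j, g' j < g j := by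
  obtain ⟨v, heq, hv⟩ : ∃ v, (∀ u < v, choiceExponent g u = choiceExponent g' u) ∧
      choiceExponent g v < choiceExponent g' v := Finsupp.Lex.lt_iff.1 hlt
  obtain ⟨j, rfl⟩ := exists_eq_of_choiceExponent_ne_zero hv.ne_bot
  have hne : g j ≠ g' j := fun h => by
    simp [choiceExponent_apply_of_mem hdisj hg (hg' j),
      choiceExponent_apply_of_mem hdisj hg' (hg' j), h] at hv
  refine ⟨j, hne.symm.lt_of_le (le_of_not_gt fun hprec => ?_)⟩
  have h := heq (g j) hprec
  simp [choiceExponent_apply_of_mem hdisj hg (hg j),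
    choiceExponent_apply_of_mem hdisj hg' (hg j), hne.symm] at h

/-- The variables that precede the one chosen by `g` in some block `F j`; they generate the colon
ideal at the monomial of `g`. -/
def precedingVars (F : ι → Finset σ) (g : ι → σ) : Finset σ :=
  Finset.univ.biUnion fun j => {v ∈ F j | v < g j}

theorem mem_precedingVars {v : σ} : v ∈ precedingVars F g ↔ ∃ j, v ∈ F j ∧ v < g j := by
  simp [precedingVars]

theorem card_precedingVars (hdisj : Pairwise (Function.onFun Disjoint F)) :
    (precedingVars F g).card = ∑ j, {v ∈ F j | v < g j}.card :=
  Finset.card_biUnion fun _ _ _ _ hij => Finset.disjoint_filter_filter (hdisj hij)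

theorem card_precedingVars_le (hg : ∀ i, g i ∈ F i) :
    (precedingVars F g).card ≤ ∑ j, ((F j).card - 1) := by
  refine Finset.card_biUnion_le.trans (Finset.sum_le_sum fun j _ => ?_)
  rw [← Finset.card_erase_of_mem (hg j)]
  exact Finset.card_le_card fun v hv => by grind

theorem card_precedingVars_of_isGreatest (hdisj : Pairwise (Function.onFun Disjoint F))
    (hg : ∀ j, IsGreatest (F j : Set σ) (g j)) :
    (precedingVars F g).card = ∑ j, ((F j).card - 1) := by
  rw [card_precedingVars hdisj]
  refine Finset.sum_congr rfl fun j _ => ?_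
  rw [← Finset.card_erase_of_mem (hg j).1]
  congr 1
  ext v
  have hle : v ∈ F j → v ≤ g j := fun hv => (hg j).2 hv
  grind

theorem isGreatest_of_forall_toLex_choiceExponent_le (hg : ∀ i, g i ∈ F i)
    (hmin : ∀ g' : ι → σ, (∀ i, g' i ∈ F i) →
      toLex (choiceExponent g) ≤ toLex (choiceExponent g')) (j : ι) :
    IsGreatest (F j : Set σ) (g j) := by
  classical
  refine ⟨hg j, fun v hv => ?_⟩
  have hupdate : ∀ i, Function.update g j v i ∈ F i := by grind
  have hle := hmin _ hupdate
  rw [← Function.update_eq_self j g, Function.update_idem] at hle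
  exact (strictAnti_toLex_choiceExponent_update g j).le_iff_ge.1 hle

theorem colon_span_choiceExponent_eq_span_precedingVars {R : Type*} [CommSemiring R]
    (hdisj : Pairwise (Function.onFun Disjoint F)) (hg : ∀ i, g i ∈ F i) :
    Submodule.colon
        (Ideal.span ((fun a => monomial a (1 : R)) '' (choiceExponent '' {g' | (∀ i, g' i ∈ F i) ∧
          toLex (choiceExponent g) < toLex (choiceExponent g')})))
        (Ideal.span {monomial (choiceExponent g) (1 : R)}) =
      Ideal.span ((fun v => (X v : MvPolynomial σ R)) '' precedingVars F g) := by
  classical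
  refine colon_span_monomial_eq_span_X ?_ fun v hv => ?_
  · rintro _ ⟨g', ⟨hg', hlt⟩, rfl⟩
    obtain ⟨j, hj⟩ := exists_lt_of_toLex_choiceExponent_lt hdisj hg hg' hlt
    refine ⟨g' j, mem_precedingVars.2 ⟨j, hg' j, hj⟩, ?_⟩
    simp [choiceExponent_apply_of_mem hdisj hg (hg' j),
      choiceExponent_apply_of_mem hdisj hg' (hg' j), hj.ne']
  · obtain ⟨j, hvF, hvj⟩ := mem_precedingVars.1 hv
    have hupdate : ∀ i, Function.update g j v i ∈ F i := by grind
    exact ⟨_, ⟨_, ⟨hupdate, toLex_choiceExponent_lt_update_iff.2 hvj⟩, rfl⟩,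
      choiceExponent_update_le g j v⟩

end Transversal

end ChoiceExponent

theorem colon_ideals_of_product_of_variable_ideals_general {R σ ι κ : Type*} [CommSemiring R]
    [Nontrivial R] [LinearOrder σ] [Fintype ι] [LinearOrder κ] (F : ι → Finset σ)
    (hdisj : Pairwise (Function.onFun Disjoint F)) (f : κ → σ →₀ ℕ)
    (hgen : Set.range f = {m | ∃ g : ι → σ, (∀ i, g i ∈ F i) ∧ m = choiceExponent g})
    (hdec : StrictAnti fun l => toLex (f l)) (i : κ) :
    ∃ W : Finset σ,
      Submodule.colon (Ideal.span {p | ∃ l < i, p = monomial (f l) (1 : R)})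
          (Ideal.span {monomial (f i) (1 : R)}) =
        Ideal.span ((fun v => (X v : MvPolynomial σ R)) '' W) ∧
      (∀ T : Finset (MvPolynomial σ R), Ideal.span (T : Set (MvPolynomial σ R)) =
        Ideal.span ((fun v => (X v : MvPolynomial σ R)) '' W) → W.card ≤ T.card) ∧
      W.card ≤ ∑ j, ((F j).card - 1) ∧
      (IsTop i → W.card = ∑ j, ((F j).card - 1)) := by
  obtain ⟨g, hg, hfi⟩ := hgen.le ⟨i, rfl⟩
  have hlarger : {p | ∃ l < i, p = monomial (f l) (1 : R)} =
      (fun a => monomial a (1 : R)) '' (choiceExponent '' {g' | (∀ j, g' j ∈ F j) ∧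
        toLex (choiceExponent g) < toLex (choiceExponent g')}) := by
    ext p
    constructor
    · rintro ⟨l, hl, rfl⟩
      obtain ⟨g', hg', hfl⟩ := hgen.le ⟨l, rfl⟩
      exact ⟨f l, ⟨g', ⟨hg', hfi ▸ hfl ▸ hdec hl⟩, hfl.symm⟩, rfl⟩
    · rintro ⟨_, ⟨g', ⟨hg', hlt⟩, rfl⟩, rfl⟩
      obtain ⟨l, hfl⟩ := hgen.ge ⟨g', hg', rfl⟩
      rw [← hfi, ← hfl] at hlt
      exact ⟨l, hdec.lt_iff_gt.1 hlt, by rw [hfl]⟩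
  refine ⟨precedingVars F g, ?_, fun T => card_le_card_of_span_eq_span_X_image,
    card_precedingVars_le hg, fun hi => card_precedingVars_of_isGreatest hdisj
      (isGreatest_of_forall_toLex_choiceExponent_le hg fun g' hg' => ?_)⟩
  · rw [hlarger, hfi, colon_span_choiceExponent_eq_span_precedingVars hdisj hg]
  · obtain ⟨l, hfl⟩ := hgen.ge ⟨g', hg', rfl⟩
    rw [← hfi, ← hfl]
    exact hdec.antitone (hi l)

/-- Lemma: let `k > 1` and let `F 0, …, F (s-1)` be pairwise disjoint `k`-element sets of
variables.  List the `k^s` minimal monomial generators of `P_{F 0} ⋯ P_{F (s-1)}` in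
decreasing lexicographic order (with `x_0 > x_1 > ⋯`), with exponent vectors
`f 0, …, f (k^s - 1)`.  Then every colon ideal `(f 0, …, f (i-1)) : (f i)` is generated by a
set `W` of variables; moreover its minimal number of generators `n_i = |W|` satisfies
`n_i ≤ (k-1)s`, with equality for the last generator, so that
`max{n_i} = n_{k^s} = (k-1)s`. -/
theorem colon_ideals_of_product_of_variable_ideals
    (K : Type*) [Field K] (n k s : ℕ) (hk : 1 < k)
    (F : Fin s → Finset (Fin n))
    (hcard : ∀ i, (F i).card = k)
    (hdisj : ∀ i j, i ≠ j → Disjoint (F i) (F j))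
    (f : Fin (k ^ s) → (Fin n →₀ ℕ))
    (hgen : Set.range f =
      {m | ∃ g : Fin s → Fin n, (∀ i, g i ∈ F i) ∧ m = ∑ i, Finsupp.single (g i) 1})
    (hdec : ∀ i j : Fin (k ^ s), i < j → toLex (f j) < toLex (f i)) :
    ∀ i : Fin (k ^ s), 0 < (i : ℕ) →
      ∃ W : Finset (Fin n),
        Submodule.colon
            (Ideal.span {p | ∃ l : Fin (k ^ s), (l : ℕ) < (i : ℕ) ∧
              p = (monomial (f l) (1 : K) : MvPolynomial (Fin n) K)})
            (Ideal.span {(monomial (f i) (1 : K) : MvPolynomial (Fin n) K)})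
          = Ideal.span ((fun v => (X v : MvPolynomial (Fin n) K)) '' ↑W) ∧
        (∀ T : Finset (MvPolynomial (Fin n) K),
          Ideal.span (↑T : Set (MvPolynomial (Fin n) K)) =
            Ideal.span ((fun v => (X v : MvPolynomial (Fin n) K)) '' ↑W) → W.card ≤ T.card) ∧
        W.card ≤ (k - 1) * s ∧
        ((i : ℕ) = k ^ s - 1 → W.card = (k - 1) * s) := by
  intro i _
  have hsum : ∑ j, ((F j).card - 1) = (k - 1) * s := by simp [hcard, mul_comm]
  obtain ⟨W, hcolon, hmin, hle, hlast⟩ := colon_ideals_of_product_of_variable_ideals_general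
    (R := K) F hdisj f hgen (fun a b => hdec a b) i
  exact ⟨W, hcolon, hmin, hsum ▸ hle, fun hi => hsum ▸ hlast fun l => Fin.le_def.2 (by omega)⟩
end

section
/- Let K be a field, Δ a pure shellable simplicial complex of dimension d on X = {x_1,…,x_n}, and k a positive integer. Let S^k = K[x_{ij} : 1 ≤ i ≤ n, 1 ≤ j ≤ k]. Then the face ring K[Δ^k] = S^k/I_{Δ^k} admits a Stanley decomposition in which every Stanley space has dimension at least d+1; in particular the Stanley depth of K[Δ^k] is at least d+1, which equals the depth of K[Δ^k], so K[Δ^k] satisfies the Stanley conjecture. -/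
open MvPolynomial

/-- The Stanley–Reisner ideal of a simplicial complex on a vertex type `σ`. -/
noncomputable def srIdeal (K : Type*) [Field K] {σ : Type*} (Δ : Set (Finset σ)) :
    Ideal (MvPolynomial σ K) :=
  Ideal.span {m | ∃ G : Finset σ, G ∉ Δ ∧ m = ∏ i ∈ G, X i}

/-- The Stanley space `u K[Z]` inside the face ring `K[Δ^k]`, where `u` is the class of the
monomial with exponent vector `b` and `Z` is a set of variables: the `K`-subspace consisting
of all elements `u·v` with `v` a polynomial in the variables of `Z`. -/
noncomputable def stanleySpace (K : Type*) [Field K] {n : ℕ} (k : ℕ)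
    (Δ : Set (Finset (Fin n))) (b : (Fin n × Fin k) →₀ ℕ) (Z : Finset (Fin n × Fin k)) :
    Submodule K (MvPolynomial (Fin n × Fin k) K ⧸ srIdeal K (expansion k Δ)) :=
  Submodule.span K
    {x | ∃ p ∈ MvPolynomial.supported K (↑Z : Set (Fin n × Fin k)),
      x = Ideal.Quotient.mk (srIdeal K (expansion k Δ)) (monomial b 1 * p)}

/-! The intervals `[R j, F j]`, where `R j` is the restriction of the facet `F j` in a shelling,
partition `Δ`. Each of them lifts to intervals of `Δ^k`: a set `G` of copies of vertices lying over
`[R j, F j]` is classified by the function sending `i ∈ R j` to the least `c` with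
`x_{ic} ∈ G`. All top elements of the lifted intervals contain the last copy of every vertex of
`F j`. Finally, the monomials supported on the faces of `Δ^k` form a basis of `K[Δ^k]`, so a
partition of the faces into intervals `[B t, Z t]` is a decomposition into the Stanley spaces
`(∏ x ∈ B t, x) K[Z t]`. -/

theorem existsUnique_isLeast_of_finite {α : Type*} [LinearOrder α] {s : Set α} (hs : s.Finite)
    (hne : s.Nonempty) : ∃! a, IsLeast s a := by
  obtain ⟨a, ha⟩ := hs.exists_minimal hne
  exact ⟨a, minimal_iff_isLeast.1 ha, fun _ hb => hb.unique (minimal_iff_isLeast.1 ha)⟩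

section IntervalPartition

variable {σ ι κ : Type*} {Γ : Set (Finset σ)} {B Z : ι → Finset σ}

/-- The Boolean intervals `[B t, Z t]` are nonempty, disjoint, and their union is `Γ`; a complex
`Γ` with such a family is called partitionable. -/
structure IsIntervalPartition (Γ : Set (Finset σ)) (B Z : ι → Finset σ) : Prop where
  subset : ∀ t, B t ⊆ Z t
  iUnion_Icc : ⋃ t, Set.Icc (B t) (Z t) = Γ
  pairwise_disjoint : Pairwise (Function.onFun Disjoint fun t => Set.Icc (B t) (Z t))

theorem IsIntervalPartition.of_existsUnique (hBZ : ∀ t, B t ⊆ Z t)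
    (hsub : ∀ t, Set.Icc (B t) (Z t) ⊆ Γ)
    (huniq : ∀ G ∈ Γ, ∃! t, G ∈ Set.Icc (B t) (Z t)) : IsIntervalPartition Γ B Z where
  subset := hBZ
  iUnion_Icc := (Set.iUnion_subset hsub).antisymm fun G hG =>
    Set.mem_iUnion.2 (huniq G hG).exists
  pairwise_disjoint s _ hst := Set.disjoint_left.2 fun G hs ht =>
    hst ((huniq G (hsub s hs)).unique hs ht)

namespace IsIntervalPartition

theorem Icc_subset (h : IsIntervalPartition Γ B Z) (t : ι) : Set.Icc (B t) (Z t) ⊆ Γ :=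
  h.iUnion_Icc ▸ Set.subset_iUnion (fun t => Set.Icc (B t) (Z t)) t

theorem existsUnique_mem_Icc (h : IsIntervalPartition Γ B Z) {G : Finset σ} (hG : G ∈ Γ) :
    ∃! t, G ∈ Set.Icc (B t) (Z t) :=
  existsUnique_of_exists_of_unique (Set.mem_iUnion.1 (h.iUnion_Icc.symm ▸ hG))
    fun _ _ hs ht => h.pairwise_disjoint.eq (Set.not_disjoint_iff.2 ⟨G, hs, ht⟩)

theorem comp_equiv (h : IsIntervalPartition Γ B Z) (e : κ ≃ ι) :
    IsIntervalPartition Γ (B ∘ e) (Z ∘ e) where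
  subset _ := h.subset _
  iUnion_Icc := (e.surjective.iUnion_comp fun t => Set.Icc (B t) (Z t)).trans h.iUnion_Icc
  pairwise_disjoint := h.pairwise_disjoint.comp_of_injective e.injective

end IsIntervalPartition

end IntervalPartition

section Shelling

variable {V : Type*} [DecidableEq V] {r : ℕ} {F : Fin r → Finset V} {j : Fin r} {P : Finset V}

/-- The restriction of `F j` in the order `F 0, …, F (r-1)`: in a shelling order it is the
smallest face of `F j` that lies in none of the earlier `F i`. -/
def shellingRestriction (F : Fin r → Finset V) (j : Fin r) : Finset V :=
  {v ∈ F j | ∃ i < j, (F j).erase v ⊆ F i}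

theorem shellingRestriction_subset (F : Fin r → Finset V) (j : Fin r) :
    shellingRestriction F j ⊆ F j :=
  Finset.filter_subset _ _

namespace IsShellingOrder

theorem exists_erase_of_subset (hF : IsShellingOrder F) (hPj : P ⊆ F j) {i : Fin r} (hij : i < j)
    (hPi : P ⊆ F i) : ∃ v ∈ F j \ P, ∃ i' < j, (F j).erase v ⊆ F i' := by
  obtain ⟨G, ⟨hGj, i', hi', hGi'⟩, hPG, hcard⟩ :=
    hF j (Nat.zero_lt_of_lt hij) P ⟨hPj, i, hij, hPi⟩
  obtain ⟨v, hvG, hv⟩ := Finset.covBy_iff_exists_insert.1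
    (Finset.covBy_iff_card_sdiff_eq_one.2 ⟨hGj, by
      rw [Finset.card_sdiff_of_subset hGj]; omega⟩)
  rw [← hv]
  exact ⟨v, Finset.mem_sdiff.2 ⟨Finset.mem_insert_self v G, fun hvP => hvG (hPG hvP)⟩, i', hi',
    (Finset.erase_insert hvG).trans_subset hGi'⟩

theorem restriction_subset_iff (hF : IsShellingOrder F) (hPj : P ⊆ F j) :
    shellingRestriction F j ⊆ P ↔ ∀ i < j, ¬ P ⊆ F i := by
  refine ⟨fun hR i hij hPi => ?_, fun hP v hv => ?_⟩
  · obtain ⟨v, hv, hearlier⟩ := hF.exists_erase_of_subset hPj hij hPi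
    obtain ⟨hvF, hvP⟩ := Finset.mem_sdiff.1 hv
    exact hvP (hR (Finset.mem_filter.2 ⟨hvF, hearlier⟩))
  · obtain ⟨-, i, hij, hi⟩ := Finset.mem_filter.1 hv
    by_contra hvP
    exact hP i hij ((Finset.subset_erase.2 ⟨hPj, hvP⟩).trans hi)

theorem mem_Icc_restriction_iff_isLeast (hF : IsShellingOrder F) :
    P ∈ Set.Icc (shellingRestriction F j) (F j) ↔ IsLeast {i | P ⊆ F i} j := by
  rw [Set.mem_Icc, and_comm]
  refine and_congr_right fun hPj => (hF.restriction_subset_iff hPj).trans ?_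
  exact forall_congr' fun i => by rw [Set.mem_ofPred_eq, ← not_lt, imp_not_comm]

theorem isIntervalPartition (hF : IsShellingOrder F) :
    IsIntervalPartition (lowerClosure (Set.range F) : Set (Finset V)) (shellingRestriction F)
      F := by
  refine .of_existsUnique (shellingRestriction_subset F) (fun j P hP => ?_) fun P hP => ?_
  · exact mem_lowerClosure.2 ⟨F j, Set.mem_range_self j, hP.2⟩
  · obtain ⟨_, ⟨j, rfl⟩, hPj⟩ := mem_lowerClosure.1 hP
    simp only [hF.mem_Icc_restriction_iff_isLeast]
    exact existsUnique_isLeast_of_finite (Set.toFinite _) ⟨j, hPj⟩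

end IsShellingOrder

end Shelling

section Expansion

variable {V κ : Type*} [DecidableEq V]

/-- The graph of `l : R → κ`, as a set of copies of vertices: the bottom element of the interval
of those `G` in which `(i, l i)` is the first copy of `i`, for each `i ∈ R`. -/
def firstCopies [DecidableEq κ] {R : Finset V} (l : R → κ) : Finset (V × κ) :=
  Finset.univ.image fun i => (i.1, l i)

theorem firstCopies_subset_iff [DecidableEq κ] {R : Finset V} {l : R → κ} {G : Finset (V × κ)} :
    firstCopies l ⊆ G ↔ ∀ i : R, (i.1, l i) ∈ G := by
  simp only [firstCopies, Finset.image_subset_iff, Finset.mem_univ, true_imp_iff]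

variable [LinearOrder κ]

/-- The copies of the vertices of `F` that do not precede the copies chosen by `l : R → κ`: the
top element of the interval whose bottom element is `firstCopies l`. -/
def laterCopies [Fintype κ] (F : Finset V) {R : Finset V} (l : R → κ) : Finset (V × κ) :=
  {x ∈ F ×ˢ Finset.univ | ∀ h : x.1 ∈ R, l ⟨x.1, h⟩ ≤ x.2}

theorem card_le_card_laterCopies [Fintype κ] [OrderTop κ] (F : Finset V) {R : Finset V}
    (l : R → κ) : F.card ≤ (laterCopies F l).card :=
  Finset.card_le_card_of_injOn (fun i => (i, ⊤)) (fun i hi => by simpa [laterCopies] using hi)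
    (Prod.mk_left_injective ⊤).injOn

theorem subset_laterCopies_iff [Fintype κ] {F R : Finset V} {l : R → κ} {G : Finset (V × κ)} :
    G ⊆ laterCopies F l ↔
      G.image Prod.fst ⊆ F ∧ ∀ i : R, l i ∈ lowerBounds {c | (i.1, c) ∈ G} := by
  simp only [laterCopies, Finset.subset_iff, Finset.mem_image, Finset.mem_filter,
    Finset.mem_product, Finset.mem_univ, lowerBounds, Set.mem_ofPred_eq, Subtype.forall,
    Prod.forall, Prod.exists]
  grind

theorem firstCopies_subset_laterCopies [Fintype κ] {F R : Finset V} (hRF : R ⊆ F) (l : R → κ) :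
    firstCopies l ⊆ laterCopies F l :=
  firstCopies_subset_iff.2 fun i => by simpa [laterCopies] using hRF i.2

theorem mem_Icc_firstCopies_laterCopies_iff [Fintype κ] {F R : Finset V} {l : R → κ}
    {G : Finset (V × κ)} :
    G ∈ Set.Icc (firstCopies l) (laterCopies F l) ↔
      G.image Prod.fst ∈ Set.Icc R F ∧ ∀ i : R, IsLeast {c | (i.1, c) ∈ G} (l i) := by
  rw [Set.mem_Icc, firstCopies_subset_iff, subset_laterCopies_iff]
  constructor
  · rintro ⟨hfirst, hGF, hlower⟩
    have hR : R ⊆ G.image Prod.fst := fun i hi => Finset.mem_image_of_mem Prod.fst (hfirst ⟨i, hi⟩)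
    exact ⟨⟨hR, hGF⟩, fun i => ⟨hfirst i, hlower i⟩⟩
  · rintro ⟨⟨-, hGF⟩, hleast⟩
    exact ⟨fun i => (hleast i).1, hGF, fun i => (hleast i).2⟩

theorem existsUnique_forall_isLeast {R : Finset V} {G : Finset (V × κ)}
    (hR : R ⊆ G.image Prod.fst) :
    ∃! l : R → κ, ∀ i : R, IsLeast {c | (i.1, c) ∈ G} (l i) := by
  have hleast (i : R) : ∃! c, IsLeast {c | (i.1, c) ∈ G} c := by
    obtain ⟨⟨_, c⟩, hc, rfl⟩ := Finset.mem_image.1 (hR i.2)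
    exact existsUnique_isLeast_of_finite
      (G.finite_toSet.preimage (Prod.mk_right_injective _).injOn) ⟨c, hc⟩
  choose l hl huniq using hleast
  exact ⟨l, hl, fun l' hl' => funext fun i => huniq i _ (hl' i)⟩

theorem IsIntervalPartition.preimage_image_fst [Fintype κ] {ι : Type*} {Γ : Set (Finset V)}
    {B Z : ι → Finset V} (h : IsIntervalPartition Γ B Z) :
    IsIntervalPartition {G : Finset (V × κ) | G.image Prod.fst ∈ Γ}
      (fun t : (t : ι) × (B t → κ) => firstCopies t.2) (fun t => laterCopies (Z t.1) t.2) := by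
  refine .of_existsUnique (fun t => firstCopies_subset_laterCopies (h.subset t.1) t.2)
    (fun t G hG => ?_) fun G hG => ?_
  · exact h.Icc_subset t.1 (mem_Icc_firstCopies_laterCopies_iff.1 hG).1
  · obtain ⟨t, ht, htuniq⟩ := h.existsUnique_mem_Icc hG
    obtain ⟨l, hl, hluniq⟩ := existsUnique_forall_isLeast ht.1
    refine ⟨⟨t, l⟩, mem_Icc_firstCopies_laterCopies_iff.2 ⟨ht, hl⟩, ?_⟩
    rintro ⟨t', l'⟩ hG'
    obtain ⟨ht', hl'⟩ := mem_Icc_firstCopies_laterCopies_iff.1 hG'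
    obtain rfl := htuniq t' ht'
    rw [hluniq l' hl']

theorem expansion_eq_preimage_image_fst (k : ℕ) (Δ : Set (Finset V)) :
    expansion k Δ =
      {G | G.image Prod.fst ∈ (lowerClosure (facets Δ) : Set (Finset V))} := by
  ext G
  simp [expansion, expandSet, Finset.subset_iff]

end Expansion

theorem isComplex_expansion {V : Type*} (k : ℕ) (Δ : Set (Finset V)) :
    IsComplex (expansion k Δ) :=
  fun _ _ ⟨F, hF, hGF⟩ hHG => ⟨F, hF, hHG.trans hGF⟩

theorem iSupIndep_span_image {ι α R M : Type*} [Ring R] [AddCommGroup M]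
    [Module R M] {v : α → M}
    {s : ι → Set α} (hv : LinearIndepOn R v (⋃ i, s i))
    (hs : Pairwise (Function.onFun Disjoint s)) :
    iSupIndep fun i => Submodule.span R (v '' s i) := by
  intro i
  simp only [← Submodule.span_iUnion, ← Set.image_iUnion]
  have hdisj : Disjoint (s i) (⋃ j, ⋃ _ : j ≠ i, s j) := by
    simpa only [Set.disjoint_iUnion_right] using fun j hj => hs (Ne.symm hj)
  refine ((linearIndepOn_union_iff hdisj).1 (hv.mono ?_)).2.2
  exact Set.union_subset (Set.subset_iUnion s i) (Set.iUnion₂_subset fun j _ =>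
    Set.subset_iUnion s j)

section MonomialSpans

theorem isCompl_restrictSupport {σ R : Type*} [CommRing R] {s t : Set (σ →₀ ℕ)} (h : IsCompl s t) :
    IsCompl (restrictSupport R s) (restrictSupport R t) := by
  simpa only [restrictSupport_eq_span, coe_basisMonomials] using
    (basisMonomials σ R).linearIndependent.isCompl_span_image (basisMonomials σ R).span_eq h

variable {σ R : Type*} [CommSemiring R]

theorem toSubmodule_supported (s : Set σ) :
    Subalgebra.toSubmodule (supported R s) = restrictSupport R {m | ↑m.support ⊆ s} := by
  ext p
  simp only [Subalgebra.mem_toSubmodule, mem_supported, mem_restrictSupport_iff, Set.subset_def,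
    SetLike.mem_coe, mem_vars_iff_mem_support, Set.mem_ofPred_eq]
  grind

/-- The exponent vector of `∏ i ∈ G, x_i`. -/
noncomputable def squarefreeExponent (G : Finset σ) : σ →₀ ℕ :=
  Finsupp.indicator G fun _ _ => 1

theorem prod_X_eq_monomial_squarefreeExponent (G : Finset σ) :
    ∏ i ∈ G, X i = monomial (squarefreeExponent G) (1 : R) := by
  simp only [squarefreeExponent, Finsupp.indicator_eq_sum_single, monomial_sum_one, X]

theorem squarefreeExponent_le_iff {G : Finset σ} {m : σ →₀ ℕ} :
    squarefreeExponent G ≤ m ↔ G ⊆ m.support := by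
  classical
  simp only [Finsupp.le_def, squarefreeExponent, Finsupp.indicator_apply, Finset.subset_iff,
    Finsupp.mem_support_iff]
  grind

theorem image_squarefreeExponent_add {B Z : Finset σ} (hBZ : B ⊆ Z) :
    (squarefreeExponent B + ·) '' {m | (m.support : Set σ) ⊆ Z} =
      {m | m.support ∈ Set.Icc B Z} := by
  classical
  ext m
  constructor
  · rintro ⟨a, ha, rfl⟩
    have hB : (squarefreeExponent B).support ⊆ Z := (Finsupp.support_indicator_subset _ _).trans hBZ
    exact ⟨squarefreeExponent_le_iff.1 le_self_add,
      Finsupp.support_add.trans (Finset.union_subset hB ha)⟩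
  · rintro ⟨hBm, hmZ⟩
    exact ⟨m - squarefreeExponent B, Finsupp.support_tsub.trans hmZ,
      add_tsub_cancel_of_le (squarefreeExponent_le_iff.2 hBm)⟩

theorem map_mulLeft_supported {B Z : Finset σ} (hBZ : B ⊆ Z) :
    (Subalgebra.toSubmodule (supported R (Z : Set σ))).map
        (LinearMap.mulLeft R (monomial (squarefreeExponent B) 1)) =
      restrictSupport R {m | m.support ∈ Set.Icc B Z} := by
  rw [toSubmodule_supported, ← image_squarefreeExponent_add hBZ, restrictSupport_eq_span,
    restrictSupport_eq_span, Submodule.map_span, Set.image_image, Set.image_image]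
  simp only [LinearMap.mulLeft_apply, monomial_mul, one_mul]

end MonomialSpans

section FaceRing

variable (K : Type*) [Field K] {σ ι : Type*} {Γ : Set (Finset σ)}

theorem restrictScalars_srIdeal (hΓ : IsComplex Γ) :
    (srIdeal K Γ).restrictScalars K = restrictSupport K {m | m.support ∉ Γ} := by
  have hgen : {p : MvPolynomial σ K | ∃ G ∉ Γ, p = ∏ i ∈ G, X i} =
      (monomial · 1) '' (squarefreeExponent '' Γᶜ) := by
    ext p
    simp [prod_X_eq_monomial_squarefreeExponent, eq_comm]
  ext p
  rw [Submodule.restrictScalars_mem, srIdeal, hgen, mem_ideal_span_monomial_image]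
  simp only [Set.exists_mem_image, squarefreeExponent_le_iff]
  refine forall₂_congr fun m _ => ⟨?_, fun hm => ⟨m.support, hm, subset_rfl⟩⟩
  rintro ⟨G, hG, hGm⟩ hm
  exact hG (hΓ hm hGm)

theorem isCompl_restrictSupport_ker_mkₐ (hΓ : IsComplex Γ) :
    IsCompl (restrictSupport K {m | m.support ∈ Γ})
      (LinearMap.ker (Ideal.Quotient.mkₐ K (srIdeal K Γ)).toLinearMap) := by
  have hker : LinearMap.ker (Ideal.Quotient.mkₐ K (srIdeal K Γ)).toLinearMap =
      (srIdeal K Γ).restrictScalars K :=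
    Submodule.ext fun _ => Ideal.Quotient.eq_zero_iff_mem
  rw [hker, restrictScalars_srIdeal K hΓ]
  exact isCompl_restrictSupport isCompl_compl

/-- The class in the face ring `K[Γ]` of the monomial with exponent vector `m`. -/
noncomputable def faceMonomial (Γ : Set (Finset σ)) (m : σ →₀ ℕ) :
    MvPolynomial σ K ⧸ srIdeal K Γ :=
  Ideal.Quotient.mkₐ K (srIdeal K Γ) (monomial m 1)

theorem map_mkₐ_restrictSupport (Γ : Set (Finset σ)) (s : Set (σ →₀ ℕ)) :
    (restrictSupport K s).map (Ideal.Quotient.mkₐ K (srIdeal K Γ)).toLinearMap =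
      Submodule.span K (faceMonomial K Γ '' s) := by
  rw [restrictSupport_eq_span, Submodule.map_span, Set.image_image]
  rfl

theorem linearIndepOn_faceMonomial (hΓ : IsComplex Γ) :
    LinearIndepOn K (faceMonomial K Γ) {m | m.support ∈ Γ} := by
  refine ((basisMonomials σ K).linearIndependent.linearIndepOn _).map_injOn
    (Ideal.Quotient.mkₐ K (srIdeal K Γ)).toLinearMap (LinearMap.disjoint_ker_iff_injOn.1 ?_)
  rw [coe_basisMonomials, ← restrictSupport_eq_span]
  exact (isCompl_restrictSupport_ker_mkₐ K hΓ).disjoint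

theorem span_faceMonomial_image (hΓ : IsComplex Γ) :
    Submodule.span K (faceMonomial K Γ '' {m | m.support ∈ Γ}) = ⊤ := by
  rw [← map_mkₐ_restrictSupport, LinearMap.map_eq_top_iff
    (LinearMap.range_eq_top.2 (Ideal.Quotient.mkₐ_surjective K _))]
  exact (isCompl_restrictSupport_ker_mkₐ K hΓ).sup_eq_top

/-- The Stanley space `u K[Z]` in the face ring `K[Γ]` of an arbitrary complex, `u` being the class
of the monomial with exponent vector `b`. For `Γ = Δ^k` it unfolds to `stanleySpace`. -/
noncomputable def faceStanleySpace (Γ : Set (Finset σ)) (b : σ →₀ ℕ) (Z : Finset σ) :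
    Submodule K (MvPolynomial σ K ⧸ srIdeal K Γ) :=
  Submodule.span K {x | ∃ p ∈ supported K (↑Z : Set σ),
    x = Ideal.Quotient.mk (srIdeal K Γ) (monomial b 1 * p)}

theorem faceStanleySpace_squarefreeExponent (Γ : Set (Finset σ)) {B Z : Finset σ} (hBZ : B ⊆ Z) :
    faceStanleySpace K Γ (squarefreeExponent B) Z =
      Submodule.span K (faceMonomial K Γ '' {m | m.support ∈ Set.Icc B Z}) := by
  rw [← map_mkₐ_restrictSupport, ← map_mulLeft_supported hBZ, ← Submodule.map_comp,
    ← Submodule.span_eq (Subalgebra.toSubmodule _), Submodule.map_span]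
  refine congrArg (Submodule.span K) (Set.ext fun x => ?_)
  exact exists_congr fun p => and_congr_right fun _ => eq_comm

/-- `K[Γ]` is the internal direct sum of the Stanley spaces `x ^ b t · K[Z t]`, each of which is a
free `K[Z t]`-module of rank one. -/
structure IsStanleyDecomposition (Γ : Set (Finset σ)) (b : ι → σ →₀ ℕ) (Z : ι → Finset σ) :
    Prop where
  injective : ∀ t, Function.Injective fun p : supported K (↑(Z t) : Set σ) =>
    Ideal.Quotient.mk (srIdeal K Γ) (monomial (b t) 1 * (p : MvPolynomial σ K))
  iSupIndep : iSupIndep fun t => faceStanleySpace K Γ (b t) (Z t)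
  iSup_eq_top : ⨆ t, faceStanleySpace K Γ (b t) (Z t) = ⊤

variable {K}

theorem injective_mk_monomial_mul (hΓ : IsComplex Γ) {B Z : Finset σ} (hBZ : B ⊆ Z) (hZ : Z ∈ Γ) :
    Function.Injective fun p : supported K (↑Z : Set σ) =>
      Ideal.Quotient.mk (srIdeal K Γ)
        (monomial (squarefreeExponent B) 1 * (p : MvPolynomial σ K)) := by
  have hmem (p : supported K (↑Z : Set σ)) :
      monomial (squarefreeExponent B) 1 * (p : MvPolynomial σ K) ∈
        restrictSupport K {m | m.support ∈ Γ} :=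
    restrictSupport_mono (R := K) (fun _ hm => hΓ hZ hm.2)
      (map_mulLeft_supported (R := K) hBZ ▸ Submodule.mem_map_of_mem p.2)
  intro p q hpq
  have hinj := LinearMap.disjoint_ker_iff_injOn.1 (isCompl_restrictSupport_ker_mkₐ K hΓ).disjoint
  exact Subtype.ext (mul_left_cancel₀ (monomial_eq_zero.not.2 one_ne_zero)
    (hinj (hmem p) (hmem q) hpq))

theorem IsIntervalPartition.isStanleyDecomposition {B Z : ι → Finset σ}
    (h : IsIntervalPartition Γ B Z) (hΓ : IsComplex Γ) :
    IsStanleyDecomposition K Γ (fun t => squarefreeExponent (B t)) Z := by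
  have hspan (t : ι) := faceStanleySpace_squarefreeExponent K Γ (h.subset t)
  have hcover : ⋃ t, {m : σ →₀ ℕ | m.support ∈ Set.Icc (B t) (Z t)} = {m | m.support ∈ Γ} := by
    rw [← h.iUnion_Icc]
    exact Set.preimage_iUnion.symm
  refine ⟨fun t => injective_mk_monomial_mul hΓ (h.subset t)
    (h.Icc_subset t (Set.right_mem_Icc.2 (h.subset t))), ?_, ?_⟩
  · simp only [hspan]
    exact iSupIndep_span_image (hcover ▸ linearIndepOn_faceMonomial K hΓ)
      fun s t hst => (h.pairwise_disjoint hst).preimage Finsupp.support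
  · simp only [hspan, ← Submodule.span_iUnion, ← Set.image_iUnion, hcover,
      span_faceMonomial_image K hΓ]

end FaceRing

theorem expansion_face_ring_stanley_general (K : Type*) [Field K] {V : Type*}
    (Δ : Set (Finset V)) (s k : ℕ) (hk : 1 ≤ k) (hcard : ∀ F ∈ facets Δ, s ≤ F.card)
    (hshell : IsShellable Δ) :
    ∃ (T : ℕ) (b : Fin T → (V × Fin k) →₀ ℕ) (Z : Fin T → Finset (V × Fin k)),
      (∀ t, s ≤ (Z t).card) ∧ IsStanleyDecomposition K (expansion k Δ) b Z := by
  classical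
  have : NeZero k := .of_pos hk
  obtain ⟨r, F, -, hrange, hF⟩ := hshell
  have hpart := hF.isIntervalPartition.preimage_image_fst (κ := Fin k)
  rw [hrange, ← expansion_eq_preimage_image_fst] at hpart
  let e := (Fintype.equivFin ((j : Fin r) × (shellingRestriction F j → Fin k))).symm
  refine ⟨_, _, _, fun t => ?_,
    (hpart.comp_equiv e).isStanleyDecomposition (isComplex_expansion k Δ)⟩
  exact (hcard _ (hrange ▸ Set.mem_range_self (e t).1)).trans (card_le_card_laterCopies _ _)

/-- Theorem: if `Δ` is a pure shellable `d`-dimensional simplicial complex and `k ≥ 1`,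
then the face ring `K[Δ^k] = S^k / I_{Δ^k}` of the expansion admits a Stanley decomposition
all of whose Stanley spaces have dimension at least `d + 1`: there are finitely many monomial
classes `u t` (with exponent vectors `b t`) and sets of variables `Z t` with `|Z t| ≥ d + 1`
such that each `u t · K[Z t]` is a free `K[Z t]`-module of rank one (the multiplication map is
injective) and `K[Δ^k]` is the internal direct sum of the Stanley spaces `u t · K[Z t]`.
In particular the Stanley depth of `K[Δ^k]` is at least `d + 1`, which is its depth, so
`K[Δ^k]` satisfies the Stanley conjecture. -/
theorem expansion_face_ring_stanley (K : Type*) [Field K] {n : ℕ}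
    (Δ : Set (Finset (Fin n))) (hΔ : IsComplex Δ) (d k : ℕ) (hk : 1 ≤ k)
    (hpure : ∀ F ∈ facets Δ, F.card = d + 1)
    (hne : ∃ F, F ∈ facets Δ)
    (hshell : IsShellable Δ) :
    ∃ (T : ℕ) (b : Fin T → ((Fin n × Fin k) →₀ ℕ)) (Z : Fin T → Finset (Fin n × Fin k)),
      (∀ t, d + 1 ≤ (Z t).card) ∧
      (∀ t, Function.Injective fun p : MvPolynomial.supported K (↑(Z t) : Set (Fin n × Fin k)) =>
        Ideal.Quotient.mk (srIdeal K (expansion k Δ))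
          (monomial (b t) 1 * (p : MvPolynomial (Fin n × Fin k) K))) ∧
      iSupIndep (fun t => stanleySpace K k Δ (b t) (Z t)) ∧
      (⨆ t, stanleySpace K k Δ (b t) (Z t)) = ⊤ := by
  obtain ⟨T, b, Z, hcard, hdec⟩ :=
    expansion_face_ring_stanley_general K Δ (d + 1) k hk (fun F hF => (hpure F hF).ge) hshell
  exact ⟨T, b, Z, hcard, hdec.injective, hdec.iSupIndep, hdec.iSup_eq_top⟩
end

section
/- Let G be a simple graph and k ≥ 1. If S is a k-simplicial set of G such that both induced subgraphs G \ S and G \ N_G[S] are k-shellable, then G is k-shellable. -/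
/-- The independence complex of a graph: faces are the independent sets. -/
def indepComplex {V : Type*} (G : SimpleGraph V) : Set (Finset V) :=
  {F | ∀ x ∈ F, ∀ y ∈ F, ¬ G.Adj x y}

/-- The closed neighborhood `N_G[S]` of a set of vertices. -/
def closedNbhd {V : Type*} (G : SimpleGraph V) (S : Set V) : Set V :=
  ⋃ x ∈ S, insert x (G.neighborSet x)

/-- The independence complex of the induced subgraph of `G` on `A`, viewed inside the
ambient vertex set: its faces are the independent sets of `G` contained in `A`. -/
def inducedIndep {V : Type*} (G : SimpleGraph V) (A : Set V) : Set (Finset V) :=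
  {F | ↑F ⊆ A ∧ F ∈ indepComplex G}

/-- `S` is a `k`-simplicial set of `G` with parts `P 0, …, P (r-1)`: `S` consists of pairwise
non-adjacent vertices, and the induced subgraph of `G` on `N_G[S]` is a complete `r`-partite
graph whose parts `P i` all have exactly `k` elements, with any two vertices in the same part
having the same open neighborhood in `G`. -/
def IsKSimplicialWithParts {V : Type*} (G : SimpleGraph V) (k : ℕ) (S : Finset V)
    {r : ℕ} (P : Fin r → Finset V) : Prop :=
  (∀ x ∈ S, ∀ y ∈ S, ¬ G.Adj x y) ∧
  (∀ i, (P i).card = k) ∧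
  (∀ i j, i ≠ j → Disjoint (P i) (P j)) ∧
  closedNbhd G ↑S = ⋃ i, ↑(P i) ∧
  (∀ i j, ∀ x ∈ P i, ∀ y ∈ P j, (G.Adj x y ↔ i ≠ j)) ∧
  (∀ i, ∀ x ∈ P i, ∀ y ∈ P i, G.neighborSet x = G.neighborSet y)

/-- `S` is a `k`-simplicial set of `G`. -/
def IsKSimplicial {V : Type*} (G : SimpleGraph V) (k : ℕ) (S : Finset V) : Prop :=
  ∃ (r : ℕ) (P : Fin r → Finset V), IsKSimplicialWithParts G k S P

/-!
Facets containing `S` come first, in the order of a shelling of `G \ N_G[S]`; they are the sets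
`F ∪ S`, and joining with `S` preserves shelling steps. The remaining facets avoid `S`, since
members of `S` have the same neighbours, and follow in the order of a shelling of `G \ S`. Such a
facet `H` contains exactly one part `Q` of `N_G[S]`. A facet containing `S` misses `Q`, and `H \ Q`
extends to one, so the only new maximal intersection with `H` is `H \ Q`, of size `|H| - k`. As a
facet contains `Q` or misses it, one whose nonempty intersection with `H` is disjoint from `H \ Q`
contains `Q`, and its union with `H \ Q` covers `H`.
-/

section ShellingStep

variable {V : Type*} [DecidableEq V] {k : ℕ}

/-- The condition under which the facet `F` may follow the facets in `A` in a `k`-shelling. The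
generating faces of `⟨F⟩ ∩ ⟨A⟩` are encoded as the intersections `Y ∩ F`, `Y ∈ A`, of cardinality
`|F| - k`. -/
def IsKShellingStep (k : ℕ) (A : Set (Finset V)) (F : Finset V) : Prop :=
  (∀ X ∈ A, ∃ Y ∈ A, X ∩ F ⊆ Y ∧ (Y ∩ F).card + k = F.card) ∧
  ∀ Y ∈ A, ∀ Z ∈ A, (Y ∩ F).card + k = F.card → (Z ∩ F).card + k = F.card →
    Y ∩ F ≠ Z ∩ F → Disjoint (Y ∩ F) (Z ∩ F) → F ⊆ Y ∪ Z

theorem IsKShellingOrder.isKShellingStep {r : ℕ} {F : Fin r → Finset V}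
    (hF : IsKShellingOrder k F) (j : Fin r) : IsKShellingStep k (F '' Set.Iio j) (F j) := by
  rcases (j : ℕ).eq_zero_or_pos with hj | hj
  · have hempty : F '' Set.Iio j = ∅ :=
      Set.image_eq_empty.2 (Set.eq_empty_of_forall_notMem fun i (hi : i < j) => by omega)
    simp [IsKShellingStep, hempty]
  obtain ⟨S, -, hS, hgen, hdisj⟩ := hF j hj
  have exists_superset : ∀ i < j, ∃ σ ∈ S, F i ∩ F j ⊆ σ := fun i hi =>
    (hgen _).1 ⟨Finset.inter_subset_right, i, hi, Finset.inter_subset_left⟩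
  have inter_mem : ∀ i < j, (F i ∩ F j).card + k = (F j).card → F i ∩ F j ∈ S := by
    intro i hi hcard
    obtain ⟨σ, hσ, hsub⟩ := exists_superset i hi
    have hσcard := (hS σ hσ).2
    rwa [Finset.eq_of_subset_of_card_le hsub (by omega)]
  have exists_eq_inter : ∀ σ ∈ S, ∃ i < j, F i ∩ F j = σ := by
    intro σ hσ
    obtain ⟨hσj, i, hi, hσi⟩ := (hgen σ).2 ⟨σ, hσ, subset_rfl⟩
    obtain ⟨τ, hτ, hsub⟩ := exists_superset i hi
    have hcard : τ.card ≤ σ.card := by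
      have := (hS σ hσ).2
      have := (hS τ hτ).2
      omega
    exact ⟨i, hi, (Finset.eq_of_superset_of_card_ge (Finset.subset_inter hσi hσj)
      ((Finset.card_le_card hsub).trans hcard))⟩
  constructor
  · rintro _ ⟨i, hi, rfl⟩
    obtain ⟨σ, hσ, hsub⟩ := exists_superset i hi
    obtain ⟨m, hm, rfl⟩ := exists_eq_inter σ hσ
    exact ⟨F m, ⟨m, hm, rfl⟩, hsub.trans Finset.inter_subset_left, (hS _ hσ).2⟩
  · rintro _ ⟨i, hi, rfl⟩ _ ⟨m, hm, rfl⟩ hicard hmcard hne hd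
    have hiS := inter_mem i hi hicard
    have hmS := inter_mem m hm hmcard
    exact (hdisj (Finset.one_lt_card.2 ⟨_, hiS, _, hmS, hne⟩) _ hiS _ hmS hd).trans
      (Finset.union_subset_union Finset.inter_subset_left Finset.inter_subset_left)

theorem isKShellingOrder_of_isKShellingStep {r : ℕ} {F : Fin r → Finset V}
    (hF : ∀ j, IsKShellingStep k (F '' Set.Iio j) (F j)) : IsKShellingOrder k F := by
  intro j hj
  obtain ⟨hsub, hdisj⟩ := hF j
  let S : Finset (Finset V) :=
    ((Finset.Iio j).image (F · ∩ F j)).filter fun σ => σ.card + k = (F j).card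
  have mem_S : ∀ {σ}, σ ∈ S ↔ (∃ i < j, F i ∩ F j = σ) ∧ σ.card + k = (F j).card := by
    simp [S]
  have exists_superset : ∀ i < j, ∃ σ ∈ S, F i ∩ F j ⊆ σ := by
    intro i hi
    obtain ⟨_, ⟨m, hm, rfl⟩, him, hcard⟩ := hsub _ ⟨i, hi, rfl⟩
    exact ⟨_, mem_S.2 ⟨⟨m, hm, rfl⟩, hcard⟩, Finset.subset_inter him Finset.inter_subset_right⟩
  refine ⟨S, ?_, ?_, fun T => ⟨?_, ?_⟩, ?_⟩
  · obtain ⟨σ, hσ, -⟩ := exists_superset ⟨0, hj.trans j.2⟩ hj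
    exact ⟨σ, hσ⟩
  · intro σ hσ
    obtain ⟨⟨i, -, rfl⟩, hcard⟩ := mem_S.1 hσ
    exact ⟨Finset.inter_subset_right, hcard⟩
  · rintro ⟨hTj, i, hi, hTi⟩
    obtain ⟨σ, hσ, h⟩ := exists_superset i hi
    exact ⟨σ, hσ, (Finset.subset_inter hTi hTj).trans h⟩
  · rintro ⟨σ, hσ, hTσ⟩
    obtain ⟨⟨i, hi, rfl⟩, -⟩ := mem_S.1 hσ
    exact ⟨hTσ.trans Finset.inter_subset_right, i, hi, hTσ.trans Finset.inter_subset_left⟩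
  · intro hS σ hσ τ hτ hd
    have hne : σ ≠ τ := by
      rintro rfl
      -- All members of `S` have the same size, so `∅ ∈ S` forces `S = {∅}`.
      have hσ0 : σ.card = 0 := Finset.card_eq_zero.2 (disjoint_self.1 hd)
      have hS0 : ∀ ρ ∈ S, ρ = ∅ := fun ρ hρ => Finset.card_eq_zero.1 (by
        have := (mem_S.1 hσ).2
        have := (mem_S.1 hρ).2
        omega)
      exact hS.not_ge (Finset.card_le_one.2 fun a ha b hb => (hS0 a ha).trans (hS0 b hb).symm)
    obtain ⟨⟨i, hi, rfl⟩, hicard⟩ := mem_S.1 hσ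
    obtain ⟨⟨m, hm, rfl⟩, hmcard⟩ := mem_S.1 hτ
    rw [← Finset.union_inter_distrib_right]
    exact Finset.subset_inter (hdisj _ ⟨i, hi, rfl⟩ _ ⟨m, hm, rfl⟩ hicard hmcard hne hd) subset_rfl

theorem IsKShellingStep.image_union {A : Set (Finset V)} {F S : Finset V}
    (h : IsKShellingStep k A F) (hA : ∀ X ∈ A, Disjoint X S) (hF : Disjoint F S) :
    IsKShellingStep k ((· ∪ S) '' A) (F ∪ S) := by
  have card_iff : ∀ X ∈ A,
      ((X ∪ S) ∩ (F ∪ S)).card + k = (F ∪ S).card ↔ (X ∩ F).card + k = F.card := by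
    intro X hX
    rw [← Finset.inter_union_distrib_right, Finset.card_union_of_disjoint hF,
      Finset.card_union_of_disjoint ((hA X hX).mono_left Finset.inter_subset_left)]
    omega
  constructor
  · rintro _ ⟨X, hX, rfl⟩
    obtain ⟨Y, hY, hsub, hcard⟩ := h.1 X hX
    refine ⟨Y ∪ S, ⟨Y, hY, rfl⟩, ?_, (card_iff Y hY).2 hcard⟩
    rw [← Finset.inter_union_distrib_right]
    exact Finset.union_subset_union_left hsub
  · rintro _ ⟨Y, hY, rfl⟩ _ ⟨Z, hZ, rfl⟩ hYcard hZcard hne hd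
    simp only [← Finset.inter_union_distrib_right] at hne hd
    have hFYZ := h.2 Y hY Z hZ ((card_iff Y hY).1 hYcard) ((card_iff Z hZ).1 hZcard)
      (fun heq => hne (by rw [heq])) (hd.mono Finset.subset_union_left Finset.subset_union_left)
    rw [← Finset.union_union_distrib_right]
    exact Finset.union_subset_union_left hFYZ

theorem inter_subset_sdiff_of_disjoint {F Q X : Finset V} (h : Disjoint Q X) :
    X ∩ F ⊆ F \ Q :=
  Finset.subset_sdiff.2
    ⟨Finset.inter_subset_right, h.symm.mono_left Finset.inter_subset_left⟩

theorem IsKShellingStep.of_inter_eq_sdiff {A B : Set (Finset V)} {F Q : Finset V}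
    (h : IsKShellingStep k A F) (hQF : Q ⊆ F) (hQ : Q.card = k)
    (hA : ∀ X ∈ A, Q ⊆ X ∨ Disjoint Q X) (hAB : ∀ X ∈ A, Q ⊆ X → X ∈ B)
    (hBA : ∀ X ∈ B, X ∈ A ∨ Disjoint Q X) (hB : ∃ Y ∈ B, Y ∩ F = F \ Q) :
    IsKShellingStep k B F := by
  have hcardQ : (F \ Q).card + k = F.card := hQ ▸ Finset.card_sdiff_add_card_eq_card hQF
  have inter_eq : ∀ {X}, Disjoint Q X → (X ∩ F).card + k = F.card → X ∩ F = F \ Q :=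
    fun hd hcard =>
      Finset.eq_of_subset_of_card_le (inter_subset_sdiff_of_disjoint hd) (by omega)
  have subset_or_disjoint : ∀ X ∈ B, Q ⊆ X ∨ Disjoint Q X := fun X hX =>
    (hBA X hX).elim (hA X) Or.inr
  have subset_union : ∀ Y, ∀ Z ∈ B, Disjoint Q Y → (Y ∩ F).card + k = F.card →
      (Z ∩ F).card + k = F.card → Y ∩ F ≠ Z ∩ F → F ⊆ Y ∪ Z := by
    intro Y Z hZ hQY hYcard hZcard hne
    have hYF := inter_eq hQY hYcard
    rcases subset_or_disjoint Z hZ with hQZ | hQZ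
    · calc F = F \ Q ∪ Q := (Finset.sdiff_union_of_subset hQF).symm
        _ ⊆ Y ∪ Z := Finset.union_subset_union (hYF ▸ Finset.inter_subset_left) hQZ
    · exact (hne (hYF.trans (inter_eq hQZ hZcard).symm)).elim
  constructor
  · intro X hX
    by_cases hQX : Disjoint Q X
    · obtain ⟨Y, hY, hYF⟩ := hB
      have hsub : X ∩ F ⊆ Y ∩ F := hYF ▸ inter_subset_sdiff_of_disjoint hQX
      exact ⟨Y, hY, hsub.trans Finset.inter_subset_left, hYF ▸ hcardQ⟩
    · obtain ⟨Y, hY, hsub, hcard⟩ := h.1 X ((hBA X hX).resolve_right hQX)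
      obtain ⟨q, hq, hqX⟩ := Finset.not_disjoint_iff.1 hQX
      have hqY : q ∈ Y := hsub (Finset.mem_inter.2 ⟨hqX, hQF hq⟩)
      have hQY : Q ⊆ Y := (hA Y hY).resolve_right (Finset.not_disjoint_iff.2 ⟨q, hq, hqY⟩)
      exact ⟨Y, hAB Y hY hQY, hsub, hcard⟩
  · intro Y hY Z hZ hYcard hZcard hne hd
    rcases hBA Y hY with hYA | hQY
    · rcases hBA Z hZ with hZA | hQZ
      · exact h.2 Y hYA Z hZA hYcard hZcard hne hd
      · exact Finset.union_comm Y Z ▸ subset_union Z Y hY hQZ hZcard hYcard hne.symm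
    · exact subset_union Y Z hZ hQY hYcard hZcard hne

end ShellingStep

section ShellingRank

variable {V α β : Type*} [DecidableEq V] [LinearOrder α] [LinearOrder β] {k : ℕ}
  {𝓐 𝓑 : Set (Finset V)}

/-- A `k`-shelling order of the family `𝓐`, given by a ranking `f` rather than by an enumeration,
so that orders can be restricted and concatenated without reindexing. -/
def IsKShellingRank (k : ℕ) (𝓐 : Set (Finset V)) (f : Finset V → α) : Prop :=
  Set.InjOn f 𝓐 ∧ ∀ F ∈ 𝓐, IsKShellingStep k {X ∈ 𝓐 | f X < f F} F

theorem IsKShellable.exists_isKShellingRank {Δ : Set (Finset V)} (h : IsKShellable k Δ) :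
    ∃ f : Finset V → ℕ, IsKShellingRank k (facets Δ) f := by
  obtain ⟨r, F, hinj, hrange, hF⟩ := h
  let f : Finset V → ℕ := Function.extend F (fun i => (i : ℕ)) 0
  have f_apply : ∀ i, f (F i) = i := hinj.extend_apply _ _
  have pred_eq : ∀ j, {X ∈ Set.range F | f X < f (F j)} = F '' Set.Iio j := by
    intro j
    ext X
    constructor
    · rintro ⟨⟨i, rfl⟩, hij⟩
      exact ⟨i, by simpa only [f_apply, Set.mem_Iio, Fin.lt_def] using hij, rfl⟩
    · rintro ⟨i, hij, rfl⟩
      exact ⟨⟨i, rfl⟩, by simpa only [f_apply, Set.mem_Iio, Fin.lt_def] using hij⟩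
  rw [← hrange]
  refine ⟨f, ?_, ?_⟩
  · rintro _ ⟨i, rfl⟩ _ ⟨j, rfl⟩ hij
    rw [f_apply, f_apply] at hij
    rw [Fin.ext hij]
  · rintro _ ⟨j, rfl⟩
    exact pred_eq j ▸ hF.isKShellingStep j

theorem IsKShellingRank.isKShellable {Δ : Set (Finset V)} {f : Finset V → α}
    (hf : IsKShellingRank k (facets Δ) f) (hfin : (facets Δ).Finite) : IsKShellable k Δ := by
  let T : Finset α := hfin.toFinset.image f
  let e := T.orderEmbOfFin rfl
  have exists_facet : ∀ i, ∃ X ∈ facets Δ, f X = e i := fun i => by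
    obtain ⟨X, hX, hXi⟩ := Finset.mem_image.1 (T.orderEmbOfFin_mem rfl i)
    exact ⟨X, hfin.mem_toFinset.1 hX, hXi⟩
  choose F hF hFe using exists_facet
  have exists_index : ∀ X ∈ facets Δ, ∃ i, F i = X := by
    intro X hX
    have hXT : f X ∈ Set.range e := by
      rw [Finset.range_orderEmbOfFin]
      exact Finset.mem_coe.2 (Finset.mem_image_of_mem f (hfin.mem_toFinset.2 hX))
    obtain ⟨i, hi⟩ := hXT
    exact ⟨i, hf.1 (hF i) hX ((hFe i).trans hi)⟩
  have lt_iff : ∀ i j, f (F i) < f (F j) ↔ i < j := fun i j => by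
    rw [hFe, hFe, e.lt_iff_lt]
  have pred_eq : ∀ j, {X ∈ facets Δ | f X < f (F j)} = F '' Set.Iio j := by
    intro j
    ext X
    constructor
    · rintro ⟨hX, hlt⟩
      obtain ⟨i, rfl⟩ := exists_index X hX
      exact ⟨i, (lt_iff i j).1 hlt, rfl⟩
    · rintro ⟨i, hij, rfl⟩
      exact ⟨hF i, (lt_iff i j).2 hij⟩
  refine ⟨T.card, F, fun i j hij => e.injective (by rw [← hFe, ← hFe, hij]),
    Set.Subset.antisymm (Set.range_subset_iff.2 hF) exists_index,
    isKShellingOrder_of_isKShellingStep fun j => pred_eq j ▸ hf.2 (F j) (hF j)⟩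

theorem IsKShellingRank.image_union {f : Finset V → α} {S : Finset V}
    (hf : IsKShellingRank k 𝓐 f) (hS : ∀ F ∈ 𝓐, Disjoint F S) :
    IsKShellingRank k ((· ∪ S) '' 𝓐) (fun X => f (X \ S)) := by
  have union_sdiff : ∀ F ∈ 𝓐, (F ∪ S) \ S = F := fun F hF =>
    Finset.union_sdiff_cancel_right (hS F hF)
  constructor
  · rintro _ ⟨F, hF, rfl⟩ _ ⟨F', hF', rfl⟩ heq
    simp only [union_sdiff F hF, union_sdiff F' hF'] at heq
    rw [hf.1 hF hF' heq]
  · rintro _ ⟨F, hF, rfl⟩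
    have pred_eq : {X ∈ (· ∪ S) '' 𝓐 | f (X \ S) < f ((F ∪ S) \ S)} =
        (· ∪ S) '' {X ∈ 𝓐 | f X < f F} := by
      ext X
      constructor
      · rintro ⟨⟨Y, hY, rfl⟩, hlt⟩
        exact ⟨Y, ⟨hY, by rwa [union_sdiff Y hY, union_sdiff F hF] at hlt⟩, rfl⟩
      · rintro ⟨Y, ⟨hY, hlt⟩, rfl⟩
        exact ⟨⟨Y, hY, rfl⟩, by rwa [union_sdiff Y hY, union_sdiff F hF]⟩
    rw [pred_eq]
    exact (hf.2 F hF).image_union (fun X hX => hS X hX.1) (hS F hF)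

theorem IsKShellingRank.exists_union {f : Finset V → α} {g : Finset V → β}
    (hf : IsKShellingRank k 𝓐 f) (hdisj : Disjoint 𝓐 𝓑) (hg : Set.InjOn g 𝓑)
    (hstep : ∀ F ∈ 𝓑, IsKShellingStep k (𝓐 ∪ {X ∈ 𝓑 | g X < g F}) F) :
    ∃ h : Finset V → α ⊕ₗ β, IsKShellingRank k (𝓐 ∪ 𝓑) h := by
  classical
  let h : Finset V → α ⊕ₗ β := fun X => if X ∈ 𝓐 then Sum.inlₗ (f X) else Sum.inrₗ (g X)
  have h_left : ∀ X ∈ 𝓐, h X = Sum.inlₗ (f X) := fun X hX => if_pos hX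
  have h_right : ∀ X ∈ 𝓑, h X = Sum.inrₗ (g X) := fun X hX =>
    if_neg (hdisj.notMem_of_mem_right hX)
  refine ⟨h, ?_, ?_⟩
  · rintro X (hX | hX) Y (hY | hY) hXY
    · rw [h_left X hX, h_left Y hY] at hXY
      exact hf.1 hX hY (Sum.inl_injective (toLex.injective hXY))
    · rw [h_left X hX, h_right Y hY] at hXY
      exact (Sum.inl_ne_inr (toLex.injective hXY)).elim
    · rw [h_right X hX, h_left Y hY] at hXY
      exact (Sum.inr_ne_inl (toLex.injective hXY)).elim
    · rw [h_right X hX, h_right Y hY] at hXY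
      exact hg hX hY (Sum.inr_injective (toLex.injective hXY))
  · rintro F (hF | hF)
    · convert hf.2 F hF using 1
      ext X
      constructor
      · rintro ⟨hX | hX, hlt⟩
        · rw [h_left X hX, h_left F hF, Sum.Lex.inl_lt_inl_iff] at hlt
          exact ⟨hX, hlt⟩
        · rw [h_right X hX, h_left F hF] at hlt
          exact (Sum.Lex.not_inr_lt_inl hlt).elim
      · rintro ⟨hX, hlt⟩
        exact ⟨Or.inl hX, by rwa [h_left X hX, h_left F hF, Sum.Lex.inl_lt_inl_iff]⟩
    · convert hstep F hF using 1
      ext X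
      constructor
      · rintro ⟨hX | hX, hlt⟩
        · exact Or.inl hX
        · rw [h_right X hX, h_right F hF, Sum.Lex.inr_lt_inr_iff] at hlt
          exact Or.inr ⟨hX, hlt⟩
      · rintro (hX | ⟨hX, hlt⟩)
        · exact ⟨Or.inl hX, by rw [h_left X hX, h_right F hF]; exact Sum.Lex.inl_lt_inr _ _⟩
        · exact ⟨Or.inr hX, by rwa [h_right X hX, h_right F hF, Sum.Lex.inr_lt_inr_iff]⟩

end ShellingRank

section IndependenceComplex

variable {V : Type*} {G : SimpleGraph V} {A : Set V} {S F H : Finset V}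

theorem exists_facet_superset [Finite V] {Δ : Set (Finset V)} (hF : F ∈ Δ) :
    ∃ H ∈ facets Δ, F ⊆ H := by
  obtain ⟨H, hFH, hH⟩ := Δ.toFinite.exists_le_maximal hF
  exact ⟨H, ⟨hH.prop, fun _ hK hHK => hH.eq_of_le hK hHK⟩, hFH⟩

theorem inducedIndep_univ (G : SimpleGraph V) : inducedIndep G Set.univ = indepComplex G := by
  simp [inducedIndep]

theorem mem_facets_inducedIndep_iff :
    F ∈ facets (inducedIndep G A) ↔
      F ∈ inducedIndep G A ∧ ∀ x ∈ A, (∀ y ∈ F, ¬ G.Adj x y) → x ∈ F := by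
  classical
  refine and_congr_right fun hF => ⟨fun hmax x hx hxF => ?_, fun h K hK hFK => ?_⟩
  · have hins : insert x F ∈ inducedIndep G A := by
      refine ⟨by simpa [Set.insert_subset_iff] using ⟨hx, hF.1⟩, ?_⟩
      simp only [indepComplex, Set.mem_ofPred_eq, Finset.forall_mem_insert, G.irrefl,
        not_false_eq_true, true_and]
      exact ⟨hxF, fun y hy => ⟨fun hyx => hxF y hy hyx.symm, hF.2 y hy⟩⟩
    exact hmax _ hins (Finset.subset_insert x F) ▸ Finset.mem_insert_self x F
  · exact hFK.antisymm fun x hx => h x (hK.1 hx) fun y hy => hK.2 x hx y (hFK hy)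

theorem mem_facets_indepComplex_iff :
    F ∈ facets (indepComplex G) ↔
      F ∈ indepComplex G ∧ ∀ x, (∀ y ∈ F, ¬ G.Adj x y) → x ∈ F := by
  rw [← inducedIndep_univ, mem_facets_inducedIndep_iff]
  simp

theorem indepComplex_mono (hH : H ∈ indepComplex G) (hFH : F ⊆ H) : F ∈ indepComplex G :=
  fun x hx y hy => hH x (hFH hx) y (hFH hy)

theorem disjoint_of_forall_adj {Q : Finset V} {s : V} (hF : F ∈ indepComplex G) (hs : s ∈ F)
    (hsQ : ∀ y ∈ Q, G.Adj s y) : Disjoint Q F :=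
  Finset.disjoint_left.2 fun y hyQ hyF => hF s hs y hyF (hsQ y hyQ)

/-- Twins in a graph: the vertices of `Q` all have the same open neighbourhood. -/
def IsTwinSet (G : SimpleGraph V) (Q : Finset V) : Prop :=
  ∀ x ∈ Q, ∀ y ∈ Q, G.neighborSet x = G.neighborSet y

theorem IsTwinSet.adj_iff {Q : Finset V} (hQ : IsTwinSet G Q) {x y : V} (hx : x ∈ Q)
    (hy : y ∈ Q) (z : V) : G.Adj x z ↔ G.Adj y z :=
  Set.ext_iff.1 (hQ x hx y hy) z

theorem IsTwinSet.subset_or_disjoint_inducedIndep {Q : Finset V} (hQ : IsTwinSet G Q)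
    (hQA : ↑Q ⊆ A) (hF : F ∈ facets (inducedIndep G A)) : Q ⊆ F ∨ Disjoint Q F := by
  refine or_iff_not_imp_right.2 fun hd x hx => ?_
  obtain ⟨q, hq, hqF⟩ := Finset.not_disjoint_iff.1 hd
  exact (mem_facets_inducedIndep_iff.1 hF).2 x (hQA hx) fun y hy hxy =>
    hF.1.2 q hqF y hy ((hQ.adj_iff hx hq y).1 hxy)

theorem IsTwinSet.subset_or_disjoint {Q : Finset V} (hQ : IsTwinSet G Q)
    (hF : F ∈ facets (indepComplex G)) : Q ⊆ F ∨ Disjoint Q F :=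
  hQ.subset_or_disjoint_inducedIndep (Set.subset_univ _) (inducedIndep_univ G ▸ hF)

theorem mem_closedNbhd {T : Set V} {y : V} :
    y ∈ closedNbhd G T ↔ ∃ x ∈ T, y = x ∨ G.Adj x y := by
  simp [closedNbhd]

theorem subset_closedNbhd (T : Set V) : T ⊆ closedNbhd G T := fun x hx =>
  mem_closedNbhd.2 ⟨x, hx, Or.inl rfl⟩

theorem disjoint_of_mem_inducedIndep_compl_closedNbhd
    (hF : F ∈ inducedIndep G (closedNbhd G ↑S)ᶜ) : Disjoint F S :=
  Finset.disjoint_left.2 fun _ hx hxS => hF.1 hx (subset_closedNbhd _ hxS)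

section LinkAndDeletion

variable [DecidableEq V]

theorem sdiff_mem_facets_inducedIndep_compl_closedNbhd (hH : H ∈ facets (indepComplex G))
    (hSH : S ⊆ H) : H \ S ∈ facets (inducedIndep G (closedNbhd G ↑S)ᶜ) := by
  obtain ⟨hHind, hHmax⟩ := mem_facets_indepComplex_iff.1 hH
  refine mem_facets_inducedIndep_iff.2
    ⟨⟨?_, indepComplex_mono hHind Finset.sdiff_subset⟩, fun x hx h => ?_⟩
  · intro y hy hyN
    obtain ⟨hyH, hyS⟩ := Finset.mem_sdiff.1 hy
    obtain ⟨s, hs, rfl | hsy⟩ := mem_closedNbhd.1 hyN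
    · exact hyS hs
    · exact hHind s (hSH hs) y hyH hsy
  · refine Finset.mem_sdiff.2
      ⟨hHmax x fun y hy hxy => ?_, fun hxS => hx (subset_closedNbhd _ hxS)⟩
    by_cases hyS : y ∈ S
    · exact hx (mem_closedNbhd.2 ⟨y, hyS, Or.inr hxy.symm⟩)
    · exact h y (Finset.mem_sdiff.2 ⟨hy, hyS⟩) hxy

theorem union_mem_facets_indepComplex (hS : S ∈ indepComplex G)
    (hF : F ∈ facets (inducedIndep G (closedNbhd G ↑S)ᶜ)) :
    F ∪ S ∈ facets (indepComplex G) := by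
  obtain ⟨⟨hFN, hFind⟩, hFmax⟩ := mem_facets_inducedIndep_iff.1 hF
  have not_adj : ∀ s ∈ S, ∀ y ∈ F, ¬ G.Adj s y := fun s hs y hy hsy =>
    hFN hy (mem_closedNbhd.2 ⟨s, hs, Or.inr hsy⟩)
  refine mem_facets_indepComplex_iff.2 ⟨fun x hx y hy => ?_, fun x hx => ?_⟩
  · rcases Finset.mem_union.1 hx with hx | hx <;> rcases Finset.mem_union.1 hy with hy | hy
    · exact hFind x hx y hy
    · exact fun hxy => not_adj y hy x hx hxy.symm
    · exact not_adj x hx y hy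
    · exact hS x hx y hy
  · by_cases hxN : x ∈ closedNbhd G (S : Set V)
    · obtain ⟨s, hs, rfl | hsx⟩ := mem_closedNbhd.1 hxN
      · exact Finset.mem_union_right _ hs
      · exact (hx s (Finset.mem_union_right _ hs) hsx.symm).elim
    · exact Finset.mem_union_left _
        (hFmax x hxN fun y hy => hx y (Finset.mem_union_left _ hy))

theorem exists_facet_inter_eq_sdiff [Finite V] {Q : Finset V} {s : V}
    (hS : S ∈ indepComplex G) (hs : s ∈ S) (hH : H ∈ indepComplex G)
    (hsQ : ∀ y ∈ Q, G.Adj s y) (hHQ : ∀ y ∈ H, y ∈ closedNbhd G (S : Set V) → y ∈ Q) :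
    ∃ Y ∈ facets (indepComplex G), S ⊆ Y ∧ Y ∩ H = H \ Q := by
  have hsdiff : H \ Q ∈ inducedIndep G (closedNbhd G ↑S)ᶜ := by
    refine ⟨fun y hy hyN => ?_, indepComplex_mono hH Finset.sdiff_subset⟩
    obtain ⟨hyH, hyQ⟩ := Finset.mem_sdiff.1 hy
    exact hyQ (hHQ y hyH hyN)
  obtain ⟨F, hF, hsub⟩ := exists_facet_superset hsdiff
  have hFS := union_mem_facets_indepComplex hS hF
  have hQFS : Disjoint Q (F ∪ S) :=
    disjoint_of_forall_adj hFS.1 (Finset.mem_union_right F hs) hsQ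
  exact ⟨F ∪ S, hFS, Finset.subset_union_right,
    (inter_subset_sdiff_of_disjoint hQFS).antisymm
      (Finset.subset_inter (hsub.trans Finset.subset_union_left) Finset.sdiff_subset)⟩

theorem image_union_facets_inducedIndep (hS : S ∈ indepComplex G) :
    (· ∪ S) '' facets (inducedIndep G (closedNbhd G ↑S)ᶜ) =
      {H ∈ facets (indepComplex G) | S ⊆ H} := by
  ext H
  constructor
  · rintro ⟨F, hF, rfl⟩
    exact ⟨union_mem_facets_indepComplex hS hF, Finset.subset_union_right⟩
  · rintro ⟨hH, hSH⟩
    exact ⟨H \ S, sdiff_mem_facets_inducedIndep_compl_closedNbhd hH hSH,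
      Finset.sdiff_union_of_subset hSH⟩

end LinkAndDeletion

theorem IsTwinSet.mem_facets_inducedIndep_compl (hS : IsTwinSet G S)
    (hH : H ∈ facets (indepComplex G)) (hSH : ¬ S ⊆ H) :
    H ∈ facets (inducedIndep G (↑S)ᶜ) := by
  obtain ⟨hHind, hHmax⟩ := mem_facets_indepComplex_iff.1 hH
  have hd : Disjoint S H := (hS.subset_or_disjoint hH).resolve_left hSH
  exact mem_facets_inducedIndep_iff.2
    ⟨⟨fun _ hy hyS => Finset.disjoint_left.1 hd hyS hy, hHind⟩, fun x _ => hHmax x⟩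

theorem IsTwinSet.mem_facets_indepComplex (hS : IsTwinSet G S)
    (hF : F ∈ facets (inducedIndep G (↑S)ᶜ)) {s y : V} (hs : s ∈ S) (hy : y ∈ F)
    (hsy : G.Adj s y) : F ∈ facets (indepComplex G) := by
  obtain ⟨⟨-, hFind⟩, hFmax⟩ := mem_facets_inducedIndep_iff.1 hF
  refine mem_facets_indepComplex_iff.2 ⟨hFind, fun x hx => hFmax x (fun hxS => ?_) hx⟩
  exact hx y hy ((hS.adj_iff hs hxS y).1 hsy)

end IndependenceComplex

section KSimplicial

variable {V : Type*} {G : SimpleGraph V} {k : ℕ} {S H : Finset V}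

theorem IsKSimplicial.mem_indepComplex (hS : IsKSimplicial G k S) : S ∈ indepComplex G := by
  obtain ⟨r, P, hP⟩ := hS
  exact hP.1

namespace IsKSimplicialWithParts

variable {r : ℕ} {P : Fin r → Finset V}

theorem exists_mem_part (hP : IsKSimplicialWithParts G k S P) {y : V}
    (hy : y ∈ closedNbhd G (S : Set V)) : ∃ i, y ∈ P i := by
  simpa [hP.2.2.2.1] using hy

theorem adj_iff (hP : IsKSimplicialWithParts G k S P) {i j : Fin r} {x y : V} (hx : x ∈ P i)
    (hy : y ∈ P j) : G.Adj x y ↔ i ≠ j :=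
  hP.2.2.2.2.1 i j x hx y hy

theorem card_part (hP : IsKSimplicialWithParts G k S P) (i : Fin r) : (P i).card = k :=
  hP.2.1 i

theorem isTwinSet_part (hP : IsKSimplicialWithParts G k S P) (i : Fin r) : IsTwinSet G (P i) :=
  hP.2.2.2.2.2 i

theorem mem_part_of_mem_closedNbhd (hP : IsKSimplicialWithParts G k S P)
    (hH : H ∈ indepComplex G) {i : Fin r} {x y : V} (hx : x ∈ H) (hxi : x ∈ P i)
    (hy : y ∈ H) (hyN : y ∈ closedNbhd G (S : Set V)) : y ∈ P i := by
  obtain ⟨j, hyj⟩ := hP.exists_mem_part hyN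
  have hij : i = j := not_not.1 fun hne => hH x hx y hy ((hP.adj_iff hxi hyj).2 hne)
  exact hij ▸ hyj

theorem subset_part (hP : IsKSimplicialWithParts G k S P) {i : Fin r} {s : V} (hs : s ∈ S)
    (hsi : s ∈ P i) : S ⊆ P i := fun _ hx =>
  hP.mem_part_of_mem_closedNbhd hP.1 hs hsi hx (subset_closedNbhd _ hx)

theorem exists_part_subset (hP : IsKSimplicialWithParts G k S P)
    (hH : H ∈ facets (indepComplex G)) (hSH : ¬ S ⊆ H) :
    ∃ i, P i ⊆ H ∧ (P i).Nonempty ∧ ∀ s ∈ S, ∀ y ∈ P i, G.Adj s y := by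
  obtain ⟨s, hs, hsH⟩ := Finset.not_subset.1 hSH
  obtain ⟨y, hy, hsy⟩ : ∃ y ∈ H, G.Adj s y := by
    by_contra! h
    exact hsH ((mem_facets_indepComplex_iff.1 hH).2 s h)
  obtain ⟨j, hsj⟩ := hP.exists_mem_part (subset_closedNbhd _ hs)
  obtain ⟨i, hyi⟩ := hP.exists_mem_part (mem_closedNbhd.2 ⟨s, hs, Or.inr hsy⟩)
  have hji : j ≠ i := (hP.adj_iff hsj hyi).1 hsy
  have hPH : P i ⊆ H := ((hP.isTwinSet_part i).subset_or_disjoint hH).resolve_right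
    (Finset.not_disjoint_iff.2 ⟨y, hyi, hy⟩)
  exact ⟨i, hPH, ⟨y, hyi⟩, fun x hx z hz => (hP.adj_iff (hP.subset_part hs hsj hx) hz).2 hji⟩

end IsKSimplicialWithParts

theorem IsKSimplicial.isTwinSet (hS : IsKSimplicial G k S) : IsTwinSet G S := by
  obtain ⟨r, P, hP⟩ := hS
  intro x hx y hy
  obtain ⟨i, hxi⟩ := hP.exists_mem_part (subset_closedNbhd _ hx)
  exact hP.isTwinSet_part i x hxi y (hP.subset_part hx hxi hy)

theorem IsKSimplicial.isKShellingStep_of_not_subset [DecidableEq V] [Finite V]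
    (hS : IsKSimplicial G k S) {A : Set (Finset V)} (hH : H ∈ facets (indepComplex G))
    (hSH : ¬ S ⊆ H) (hstep : IsKShellingStep k (facets (inducedIndep G (↑S)ᶜ) ∩ A) H) :
    IsKShellingStep k
      ({X ∈ facets (indepComplex G) | S ⊆ X} ∪ {X ∈ facets (indepComplex G) | ¬ S ⊆ X} ∩ A)
      H := by
  obtain ⟨s, hs, -⟩ := Finset.not_subset.1 hSH
  have hSind := hS.mem_indepComplex
  have hStwin := hS.isTwinSet
  obtain ⟨r, P, hP⟩ := hS
  obtain ⟨i, hPH, ⟨q, hq⟩, hadj⟩ := hP.exists_part_subset hH hSH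
  have hPS : (P i : Set V) ⊆ (↑S)ᶜ := fun y hy hyS => G.irrefl (hadj y hyS y hy)
  have hHN : ∀ y ∈ H, y ∈ closedNbhd G (S : Set V) → y ∈ P i := fun y hy =>
    hP.mem_part_of_mem_closedNbhd hH.1 (hPH hq) hq hy
  refine hstep.of_inter_eq_sdiff hPH (hP.card_part i) (fun X hX => ?_) ?_ ?_ ?_
  · exact (hP.isTwinSet_part i).subset_or_disjoint_inducedIndep hPS hX.1
  · rintro X ⟨hX, hXA⟩ hPX
    exact Or.inr ⟨⟨hStwin.mem_facets_indepComplex hX hs (hPX hq) (hadj s hs q hq),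
      fun hSX => hX.1.1 (hSX hs) hs⟩, hXA⟩
  · rintro X (⟨hX, hSX⟩ | ⟨⟨hX, hSX⟩, hXA⟩)
    · exact Or.inr (disjoint_of_forall_adj hX.1 (hSX hs) (hadj s hs))
    · exact Or.inl ⟨hStwin.mem_facets_inducedIndep_compl hX hSX, hXA⟩
  · obtain ⟨Y, hY, hSY, hYH⟩ := exists_facet_inter_eq_sdiff hSind hs hH.1 (hadj s hs) hHN
    exact ⟨Y, Or.inl ⟨hY, hSY⟩, hYH⟩

end KSimplicial

/-- Theorem: if `S` is a `k`-simplicial set of `G` such that both `G \ S` and `G \ N_G[S]`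
are `k`-shellable, then `G` is `k`-shellable. -/
theorem isKShellable_of_kSimplicial {V : Type*} [DecidableEq V] [Fintype V]
    (G : SimpleGraph V) (k : ℕ) (hk : 1 ≤ k) (S : Finset V)
    (hS : IsKSimplicial G k S)
    (h₁ : IsKShellable k (inducedIndep G (↑S)ᶜ))
    (h₂ : IsKShellable k (inducedIndep G (closedNbhd G ↑S)ᶜ)) :
    IsKShellable k (indepComplex G) := by
  obtain ⟨f₁, hf₁⟩ := h₁.exists_isKShellingRank
  obtain ⟨f₂, hf₂⟩ := h₂.exists_isKShellingRank
  have hcontaining := hf₂.image_union fun F hF =>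
    disjoint_of_mem_inducedIndep_compl_closedNbhd hF.1
  rw [image_union_facets_inducedIndep hS.mem_indepComplex] at hcontaining
  have mem_deletion : ∀ H ∈ {H ∈ facets (indepComplex G) | ¬ S ⊆ H},
      H ∈ facets (inducedIndep G (↑S)ᶜ) := fun H hH =>
    hS.isTwinSet.mem_facets_inducedIndep_compl hH.1 hH.2
  obtain ⟨f, hf⟩ := hcontaining.exists_union
    (Set.disjoint_left.2 fun H hH hH' => hH'.2 hH.2) (hf₁.1.mono mem_deletion)
    fun H hH => hS.isKShellingStep_of_not_subset hH.1 hH.2 (hf₁.2 H (mem_deletion H hH))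
  have facets_eq : {H ∈ facets (indepComplex G) | S ⊆ H} ∪
      {H ∈ facets (indepComplex G) | ¬ S ⊆ H} = facets (indepComplex G) :=
    Set.inter_union_compl _ _
  rw [facets_eq] at hf
  exact hf.isKShellable (Set.toFinite _)
end
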